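/- Let 1 ≤ p₀ < q₀ ≤ ∞ and suppose that a family {T_t}_{t>0} of sublinear operators satisfies L^p–L^q full off-diagonal estimates for every pair p, q with p₀ < p ≤ q < q₀. Then for all p, q with p₀ < p ≤ q < q₀ and every weight w ∈ A_{p/p₀} ∩ RH_{(q₀/q)′}, the family {T_t}_{t>0} satisfies L^p(w)–L^q(w) off-diagonal estimates on balls, where (q₀/q)′ is the conjugate exponent of q₀/q (equal to 1 when q₀ = ∞). -/

import Mathlib

/-!
The idea is to lower `p` to some `p₁ ∈ (p₀, p)` and to raise `q` to some `q₁ ∈ (q, q₀)` so that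
Hölder's inequality turns weighted averages over balls into unweighted `L^{p₁}` and `L^{q₁}` norms,
between which the full off-diagonal estimate is available.

Write `κ = 1/(s-1)` for the dual exponent of `A_s`, where `s = p/p₀`. If `w ∈ A_{p/p₁}`, then
`‖f‖_{L^{p₁}(S)} ≲ |B|^{1/p₁} (⨍ |f|^p dw)^{1/p}` for `S ⊆ B` (`lower`); if `w ∈ RH_σ` and
`q₁ = q σ'`, then `(⨍ |g|^q dw)^{1/q} ≲ |B|^{-1/q₁} ‖g‖_{L^{q₁}(S)}` (`upper`). Combining both with
the `L^{p₁}`–`L^{q₁}` estimate between a ball and an annulus, which lie at distance at least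
`2^j r / 2`, leaves powers of `r`, `2^j` and `t`, which are absorbed into `2^{jθ₁} Υ^{θ₂}`
(`scale_bound`, `offBalls_of_pair`). Both Hölder inequalities hold without measurability of `f` or
`T_t f`, since the weight is measurable (`holder_nonmeas`).

That `p₁ > p₀` and `q₁ < q₀` can be chosen is the openness of the classes: `w ∈ A_s` implies
`w ∈ A_{s-δ}` (`Muck.open_dual`) and `w ∈ A_s ∩ RH_σ` implies `w ∈ RH_{σ+δ}` (`Muck.open_RH`). Both
follow from the reverse Hölder inequality for Muckenhoupt weights (`Muck.reverse_holder`), applied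
to `w^{-κ}` and to `w^σ`. This inequality is proved on balls, without dyadic cubes. The condition
`A_s` makes `w` doubling and prevents it from being small on most of a ball (`Muck.small_set`,
`Muck.doubling`). For a point `y` of a ball `B` at which `w` exceeds a level `t` above its average,
shrinking `B` towards `y` by homotheties of centre `y` gives a ball inside `B` on which the average
of `w` is comparable to `t` (`Muck.stopping`). The Vitali covering lemma turns this into
`∫_{B ∩ {w > t}} w ≤ K t |B ∩ {w > β t}|` (`Muck.level_set`), and integration in `t` against
`t^{ε-1} dt` for small `ε` gives the reverse Hölder inequality.

A weight in `A_s` is either zero almost everywhere, in which case the assertion is trivial, or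
positive almost everywhere (`ae_zero_or_ae_pos`), in which case it is replaced by a representative
that is measurable and positive everywhere.
-/

open MeasureTheory Metric Set ENNReal
open scoped NNReal

noncomputable section

/-- Euclidean space `ℝⁿ`. -/
abbrev En (n : ℕ) := EuclideanSpace ℝ (Fin n)

/-- A sublinear operator (pointwise a.e. with respect to `ν`). -/
def Sublin {n : ℕ} (ν : Measure (En n)) (T : (En n → ℝ) → (En n → ℝ)) : Prop :=
  (∀ f g : En n → ℝ, ∀ᵐ x ∂ν, |T (f + g) x| ≤ |T f x| + |T g x|) ∧
  (∀ (c : ℝ) (f : En n → ℝ), ∀ᵐ x ∂ν, |T (c • f) x| = |c| * |T f x|)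

/-- The annulus `C_j(B)`: `C₁(B) = 4B` and `C_j(B) = 2^{j+1}B ∖ 2^{j}B` for `j ≥ 2`. -/
def ann {n : ℕ} (x : En n) (r : ℝ) (j : ℕ) : Set (En n) :=
  if j = 1 then ball x (4 * r) else ball x ((2 : ℝ) ^ (j + 1) * r) \ ball x ((2 : ℝ) ^ j * r)

/-- The `L^p`-average `(⨍_S |g|^p dν)^{1/p}` of `g` on `S`, normalized by `ν N`; for `p = ∞` it
is the essential supremum on `S`. -/
def setAvg {n : ℕ} (ν : Measure (En n)) (S N : Set (En n)) (p : ℝ≥0∞) (g : En n → ℝ) : ℝ≥0∞ :=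
  eLpNorm g p ((ν N)⁻¹ • ν.restrict S)

/-- `Υ(s) = max (s, 1/s)`. -/
def Ups (s : ℝ) : ℝ := max s s⁻¹

/-- `L^p(ν)–L^q(ν)` off-diagonal estimates on balls for the family `{T_t}_{t>0}`. -/
def OffBalls {n : ℕ} (ν : Measure (En n)) (p q : ℝ≥0∞)
    (T : ℝ → (En n → ℝ) → (En n → ℝ)) : Prop :=
  ∃ θ₁ θ₂ c C : ℝ, 0 < θ₁ ∧ 0 < θ₂ ∧ 0 < c ∧ 0 < C ∧
    ∀ t : ℝ, 0 < t → ∀ (x : En n) (r : ℝ), 0 < r → ∀ f : En n → ℝ,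
      (setAvg ν (ball x r) (ball x r) q (T t ((ball x r).indicator f))
        ≤ ENNReal.ofReal (C * Ups (r / Real.sqrt t) ^ θ₂) *
            setAvg ν (ball x r) (ball x r) p f) ∧
      (∀ j : ℕ, 2 ≤ j →
        setAvg ν (ball x r) (ball x r) q (T t ((ann x r j).indicator f))
          ≤ ENNReal.ofReal (C * (2 : ℝ) ^ ((j : ℝ) * θ₁) *
                Ups ((2 : ℝ) ^ j * r / Real.sqrt t) ^ θ₂ *
                Real.exp (-c * (4 : ℝ) ^ j * r ^ 2 / t)) *
              setAvg ν (ann x r j) (ball x ((2 : ℝ) ^ (j + 1) * r)) p f) ∧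
      (∀ j : ℕ, 2 ≤ j →
        setAvg ν (ann x r j) (ball x ((2 : ℝ) ^ (j + 1) * r)) q (T t ((ball x r).indicator f))
          ≤ ENNReal.ofReal (C * (2 : ℝ) ^ ((j : ℝ) * θ₁) *
                Ups ((2 : ℝ) ^ j * r / Real.sqrt t) ^ θ₂ *
                Real.exp (-c * (4 : ℝ) ^ j * r ^ 2 / t)) *
              setAvg ν (ball x r) (ball x r) p f)

/-- The distance `d(E,F)` between two sets. -/
def setD {n : ℕ} (A B : Set (En n)) : ℝ := (⨅ a ∈ A, ⨅ b ∈ B, edist a b).toReal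

/-- `L^p–L^q` full off-diagonal estimates (with respect to Lebesgue measure). -/
def FullOff {n : ℕ} (p q : ℝ≥0∞) (T : ℝ → (En n → ℝ) → (En n → ℝ)) : Prop :=
  ∃ c C : ℝ, 0 < c ∧ 0 < C ∧
    ∀ t : ℝ, 0 < t → ∀ E F : Set (En n), IsClosed E → IsClosed F → ∀ f : En n → ℝ,
      eLpNorm (T t (E.indicator f)) q (volume.restrict F)
        ≤ ENNReal.ofReal
            (C * t ^ (-(((n : ℝ) * (p⁻¹).toReal - (n : ℝ) * (q⁻¹).toReal) / 2)) *
              Real.exp (-c * setD E F ^ 2 / t)) *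
          eLpNorm f p (volume.restrict E)

/-- The average `⨍_S g dx` of an `ℝ≥0∞`-valued function (Lebesgue measure). -/
def lavg {n : ℕ} (S : Set (En n)) (g : En n → ℝ≥0∞) : ℝ≥0∞ :=
  (∫⁻ y in S, g y) / volume S

/-- The Muckenhoupt class `A_s` for `s = 1` and `1 < s < ∞` (Lebesgue measure). -/
def MemA {n : ℕ} (w : En n → ℝ) (s : ℝ) : Prop :=
  (s = 1 ∧ ∃ C : ℝ≥0, ∀ (x : En n) (r : ℝ), 0 < r →
      ∀ᵐ y ∂volume.restrict (ball x r),
        lavg (ball x r) (fun z => ENNReal.ofReal (w z)) ≤ (C : ℝ≥0∞) * ENNReal.ofReal (w y)) ∨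
  (1 < s ∧ ∃ C : ℝ≥0, ∀ (x : En n) (r : ℝ), 0 < r →
      lavg (ball x r) (fun z => ENNReal.ofReal (w z)) *
        (lavg (ball x r) (fun z => ENNReal.ofReal (w z) ^ (1 - s / (s - 1)))) ^ (s - 1)
        ≤ (C : ℝ≥0∞))

/-- The reverse Hölder class `RH_s`, `1 < s < ∞` (Lebesgue measure). -/
def MemRH {n : ℕ} (w : En n → ℝ) (s : ℝ) : Prop :=
  ∃ C : ℝ≥0, ∀ (x : En n) (r : ℝ), 0 < r →
    (lavg (ball x r) (fun z => ENNReal.ofReal (w z) ^ s)) ^ (1 / s)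
      ≤ (C : ℝ≥0∞) * lavg (ball x r) (fun z => ENNReal.ofReal (w z))

/-! ### Averages over balls and the Muckenhoupt condition -/

lemma lavg_ball_eq {n : ℕ} (x : En n) {ρ : ℝ} (hρ : 0 < ρ) (g : En n → ℝ≥0∞) :
    lavg (ball x ρ) g = lavg (closedBall x ρ) g := by
  have h : (ball x ρ : Set (En n)) =ᵐ[volume] closedBall x ρ := by
    rw [← ball_union_sphere]
    exact (union_ae_eq_left_of_ae_eq_empty
      (ae_eq_empty.2 (Measure.addHaar_sphere_of_ne_zero volume x hρ.ne'))).symm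
  rw [lavg, lavg, Measure.restrict_congr_set h, measure_congr h]

lemma vol_pos {n : ℕ} (x : En n) {ρ : ℝ} (hρ : 0 < ρ) : volume (closedBall x ρ) ≠ 0 :=
  (measure_closedBall_pos volume x hρ).ne'

lemma vol_fin {n : ℕ} (x : En n) (ρ : ℝ) : volume (closedBall x ρ) ≠ ∞ :=
  measure_closedBall_lt_top.ne

/-- Scaling of the volume of balls (valid in every dimension, including `0`). -/
lemma vol_scale {n : ℕ} (x y : En n) {ρ a : ℝ} (hρ : 0 ≤ ρ) (ha : 0 ≤ a) :
    volume (closedBall x (a * ρ)) = ENNReal.ofReal a ^ n * volume (closedBall y ρ) := by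
  rw [Measure.addHaar_closedBall _ _ (by positivity), Measure.addHaar_closedBall _ _ hρ, mul_pow,
    ENNReal.ofReal_mul (by positivity), ENNReal.ofReal_pow ha, mul_assoc]
  simp

lemma lavg_mul_vol {n : ℕ} (x : En n) {ρ : ℝ} (hρ : 0 < ρ) (g : En n → ℝ≥0∞) :
    lavg (closedBall x ρ) g * volume (closedBall x ρ) = ∫⁻ y in closedBall x ρ, g y :=
  ENNReal.div_mul_cancel (vol_pos x hρ) (vol_fin x ρ)

lemma lavg_ne_zero {n : ℕ} (x : En n) {ρ : ℝ} (hρ : 0 < ρ) {g : En n → ℝ≥0∞}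
    (hg : Measurable g) (h0 : ∀ y, g y ≠ 0) : lavg (closedBall x ρ) g ≠ 0 := by
  intro h
  have h1 : ∫⁻ y in closedBall x ρ, g y = 0 := by rw [← lavg_mul_vol x hρ, h, zero_mul]
  rw [lintegral_eq_zero_iff hg] at h1
  have h2 : ∀ᵐ y ∂(volume.restrict (closedBall x ρ)), False := by
    filter_upwards [h1] with y hy using h0 y hy
  rw [Filter.eventually_false_iff_eq_bot, ae_eq_bot, Measure.restrict_eq_zero] at h2
  exact vol_pos x hρ h2

/-- The Muckenhoupt condition over closed balls with the dual exponent `κ = 1/(s-1)`, for weights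
that are measurable, positive and finite at every point. -/
structure Muck {n : ℕ} (u : En n → ℝ≥0∞) (κ : ℝ) (C : ℝ≥0) : Prop where
  meas : Measurable u
  ne_zero : ∀ x, u x ≠ 0
  ne_top : ∀ x, u x ≠ ∞
  pos : 0 < κ
  bound : ∀ (x : En n) (ρ : ℝ), 0 < ρ →
    lavg (closedBall x ρ) u * lavg (closedBall x ρ) (fun y => u y ^ (-κ)) ^ (1 / κ) ≤ C

namespace Muck

variable {n : ℕ} {u : En n → ℝ≥0∞} {κ : ℝ} {C : ℝ≥0}

lemma meas_dual (h : Muck u κ C) : Measurable (fun y => u y ^ (-κ)) := h.meas.pow_const _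

lemma dual_ne_zero (h : Muck u κ C) (y : En n) : u y ^ (-κ) ≠ 0 := by
  simp [ENNReal.rpow_eq_zero_iff, h.ne_zero y, h.ne_top y]

lemma dual_ne_top (h : Muck u κ C) (y : En n) : u y ^ (-κ) ≠ ∞ := by
  simp [ENNReal.rpow_eq_top_iff, h.ne_zero y, h.ne_top y]

lemma avg_ne_zero (h : Muck u κ C) (x : En n) {ρ : ℝ} (hρ : 0 < ρ) :
    lavg (closedBall x ρ) u ≠ 0 := lavg_ne_zero x hρ h.meas h.ne_zero

lemma avg_ne_top (h : Muck u κ C) (x : En n) {ρ : ℝ} (hρ : 0 < ρ) :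
    lavg (closedBall x ρ) u ≠ ∞ := by
  intro ht
  have h1 := h.bound x ρ hρ
  have h2 : lavg (closedBall x ρ) (fun y => u y ^ (-κ)) ^ (1 / κ) ≠ 0 := by
    have := lavg_ne_zero x hρ h.meas_dual h.dual_ne_zero
    have hk := h.pos
    simp [ENNReal.rpow_eq_zero_iff, this, hk.le]
  rw [ht, ENNReal.top_mul h2] at h1
  exact absurd h1 (by simp)

/-- The dual average is controlled by the average. -/
lemma dual_le (h : Muck u κ C) (x : En n) {ρ : ℝ} (hρ : 0 < ρ) :
    lavg (closedBall x ρ) (fun y => u y ^ (-κ)) ≤ (C / lavg (closedBall x ρ) u) ^ κ := by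
  have hk := h.pos
  have h1 : lavg (closedBall x ρ) (fun y => u y ^ (-κ)) ^ (1 / κ) ≤
      C / lavg (closedBall x ρ) u := by
    rw [ENNReal.le_div_iff_mul_le (Or.inl (h.avg_ne_zero x hρ)) (Or.inl (h.avg_ne_top x hρ)),
      mul_comm]
    exact h.bound x ρ hρ
  calc _ = (lavg (closedBall x ρ) (fun y => u y ^ (-κ)) ^ (1 / κ)) ^ κ := by
        rw [← ENNReal.rpow_mul, one_div_mul_cancel hk.ne', ENNReal.rpow_one]
    _ ≤ _ := ENNReal.rpow_le_rpow h1 hk.le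

/-- The `A_∞` property: the set where `u` is much smaller than its average over a ball has small
relative measure. -/
lemma small_set (h : Muck u κ C) {η : ℝ≥0} (hη : η ≠ 0) :
    ∃ β : ℝ≥0, 0 < β ∧ β ≤ 1 ∧ ∀ (x : En n) (ρ : ℝ), 0 < ρ →
      volume (closedBall x ρ ∩ {y | u y ≤ β * lavg (closedBall x ρ) u}) ≤
        η * volume (closedBall x ρ) := by
  have hk := h.pos
  refine ⟨min 1 (η ^ (1 / κ) / (C + 1)), ?_, min_le_left _ _, ?_⟩
  · have : 0 < η := pos_iff_ne_zero.2 hη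
    have := NNReal.rpow_pos (p := 1 / κ) this
    positivity
  set β : ℝ≥0 := min 1 (η ^ (1 / κ) / (C + 1)) with hβ
  have hβ0 : 0 < β := by
    have : 0 < η := pos_iff_ne_zero.2 hη
    have := NNReal.rpow_pos (p := 1 / κ) this
    positivity
  have hCβ : (β : ℝ≥0∞) * C ≤ (η : ℝ≥0∞) ^ (1 / κ) := by
    have : β * C ≤ η ^ (1 / κ) := by
      calc β * C ≤ (η ^ (1 / κ) / (C + 1)) * (C + 1) := by
            gcongr
            · exact min_le_right _ _
            · exact le_self_add
        _ = _ := div_mul_cancel₀ _ (by positivity)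
    rw [← ENNReal.coe_rpow_of_nonneg _ (by positivity), ← ENNReal.coe_mul]
    exact_mod_cast this
  intro x ρ hρ
  set a := lavg (closedBall x ρ) u with ha
  have ha0 : a ≠ 0 := h.avg_ne_zero x hρ
  have hat : a ≠ ∞ := h.avg_ne_top x hρ
  have hb0 : (β : ℝ≥0∞) * a ≠ 0 := mul_ne_zero (by exact_mod_cast hβ0.ne') ha0
  have hbt : (β : ℝ≥0∞) * a ≠ ∞ := ENNReal.mul_ne_top ENNReal.coe_ne_top hat
  have h1 : (β * a) ^ (-κ) * volume (closedBall x ρ ∩ {y | u y ≤ β * a}) ≤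
      (C / a) ^ κ * volume (closedBall x ρ) := by
    calc _ ≤ (β * a) ^ (-κ) * (volume.restrict (closedBall x ρ))
            {y | (β * a) ^ (-κ) ≤ u y ^ (-κ)} := by
          refine mul_le_mul' le_rfl ?_
          rw [Measure.restrict_apply' measurableSet_closedBall, inter_comm]
          apply measure_mono
          apply inter_subset_inter_left
          intro y hy
          change (β * a) ^ (-κ) ≤ u y ^ (-κ)
          rw [ENNReal.rpow_neg, ENNReal.rpow_neg, ENNReal.inv_le_inv]
          exact ENNReal.rpow_le_rpow hy hk.le
      _ ≤ ∫⁻ y in closedBall x ρ, u y ^ (-κ) := mul_meas_ge_le_lintegral h.meas_dual _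
      _ = lavg (closedBall x ρ) (fun y => u y ^ (-κ)) * volume (closedBall x ρ) :=
          (lavg_mul_vol x hρ _).symm
      _ ≤ _ := by gcongr; exact h.dual_le x hρ
  calc volume (closedBall x ρ ∩ {y | u y ≤ β * a})
      = (β * a) ^ κ * ((β * a) ^ (-κ) * volume (closedBall x ρ ∩ {y | u y ≤ β * a})) := by
        rw [← mul_assoc, ← ENNReal.rpow_add _ _ hb0 hbt]; simp
    _ ≤ (β * a) ^ κ * ((C / a) ^ κ * volume (closedBall x ρ)) := by gcongr
    _ = (β * C) ^ κ * volume (closedBall x ρ) := by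
        rw [← mul_assoc, ← ENNReal.mul_rpow_of_nonneg _ _ hk.le]
        congr 2
        rw [mul_assoc, ENNReal.mul_div_cancel ha0 hat]
    _ ≤ ((η : ℝ≥0∞) ^ (1 / κ)) ^ κ * volume (closedBall x ρ) := by gcongr
    _ = _ := by rw [← ENNReal.rpow_mul, one_div_mul_cancel hk.ne', ENNReal.rpow_one]

/-- A weight as in `small_set` is doubling, in the form needed for Vitali enlargements by `5`;
the same constant `β` gives a lower bound for the measure of the set where `u` is not small. -/
lemma doubling (h : Muck u κ C) :
    ∃ β D : ℝ≥0, 0 < β ∧ β ≤ 1 ∧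
      (∀ (x : En n) (ρ : ℝ), 0 < ρ →
        volume (closedBall x ρ) ≤
          2 * volume (closedBall x ρ ∩ {y | β * lavg (closedBall x ρ) u < u y})) ∧
      ∀ (x : En n) (ρ : ℝ), 0 < ρ →
        ∫⁻ y in closedBall x (5 * ρ), u y ≤ D * ∫⁻ y in closedBall x ρ, u y := by
  have key : ∀ (V X Y : ℝ≥0∞), V ≠ ∞ → V ≤ X + Y → 2 * X ≤ V → V ≤ 2 * Y := by
    intro V X Y hV h1 h2
    have h3 : V + V ≤ V + 2 * Y := by
      calc V + V = 2 * V := (two_mul V).symm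
        _ ≤ 2 * (X + Y) := by gcongr
        _ = 2 * X + 2 * Y := by ring
        _ ≤ _ := by gcongr
    exact (ENNReal.add_le_add_iff_left hV).1 h3
  obtain ⟨β, hβ0, hβ1, hβ⟩ := h.small_set (η := 2⁻¹ * (5⁻¹) ^ n) (by positivity)
  have hcompl : ∀ (S : Set (En n)) (b : ℝ≥0∞),
      volume S ≤ volume (S ∩ {y | u y ≤ b}) + volume (S ∩ {y | b < u y}) := by
    intro S b
    refine (measure_mono ?_).trans (measure_union_le _ _)
    intro y hy
    rcases le_or_gt (u y) b with h | h
    · exact Or.inl ⟨hy, h⟩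
    · exact Or.inr ⟨hy, h⟩
  have h5 : ∀ V : ℝ≥0∞, 2 * (((2⁻¹ * (5⁻¹) ^ n : ℝ≥0) : ℝ≥0∞) * ((5 : ℝ≥0∞) ^ n * V)) = V := by
    intro V
    have : (2 : ℝ≥0∞) * (((2⁻¹ * (5⁻¹) ^ n : ℝ≥0) : ℝ≥0∞) * (5 : ℝ≥0∞) ^ n) = 1 := by
      have h6 : (2 : ℝ≥0) * ((2⁻¹ * (5⁻¹) ^ n) * 5 ^ n) = 1 := by
        rw [mul_assoc, ← mul_pow]; norm_num
      exact_mod_cast congrArg ((↑) : ℝ≥0 → ℝ≥0∞) h6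
    rw [← mul_assoc, ← mul_assoc, mul_assoc 2, this, one_mul]
  refine ⟨β, 2 * 5 ^ n * β⁻¹, hβ0, hβ1, ?_, ?_⟩
  · intro x ρ hρ
    refine key _ _ _ (vol_fin x ρ) (hcompl _ _) ?_
    calc _ ≤ 2 * (((2⁻¹ * (5⁻¹) ^ n : ℝ≥0) : ℝ≥0∞) * volume (closedBall x ρ)) := by
          gcongr; exact hβ x ρ hρ
      _ ≤ 2 * (((2⁻¹ * (5⁻¹) ^ n : ℝ≥0) : ℝ≥0∞) * (5 ^ n * volume (closedBall x ρ))) := by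
          gcongr
          exact le_mul_of_one_le_left (zero_le) (one_le_pow₀ (by norm_num))
      _ = _ := h5 _
  · intro x ρ hρ
    have hV5 : volume (closedBall x (5 * ρ)) = 5 ^ n * volume (closedBall x ρ) := by
      rw [vol_scale x x hρ.le (by norm_num)]; norm_num
    set a := lavg (closedBall x (5 * ρ)) u with ha
    have h1 : volume (closedBall x ρ) ≤ 2 * volume (closedBall x ρ ∩ {y | β * a < u y}) := by
      refine key _ _ _ (vol_fin x ρ) (hcompl _ _) ?_
      calc _ ≤ 2 * volume (closedBall x (5 * ρ) ∩ {y | u y ≤ β * a}) := by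
            gcongr; linarith
        _ ≤ 2 * (((2⁻¹ * (5⁻¹) ^ n : ℝ≥0) : ℝ≥0∞) * volume (closedBall x (5 * ρ))) := by
            gcongr; exact hβ x (5 * ρ) (by positivity)
        _ = _ := by rw [hV5, h5]
    have h2 : β * a * volume (closedBall x ρ ∩ {y | β * a < u y}) ≤
        ∫⁻ y in closedBall x ρ, u y := by
      refine le_trans ?_ (mul_meas_ge_le_lintegral h.meas (β * a))
      refine mul_le_mul' le_rfl ?_
      rw [Measure.restrict_apply' measurableSet_closedBall, inter_comm]
      apply measure_mono
      apply inter_subset_inter_left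
      intro y hy
      have hy' : β * a < u y := hy
      exact hy'.le
    rw [← lavg_mul_vol x (by positivity : 0 < 5 * ρ), ← ha, hV5]
    have hβe : (β : ℝ≥0∞)⁻¹ * β = 1 :=
      ENNReal.inv_mul_cancel (by exact_mod_cast hβ0.ne') ENNReal.coe_ne_top
    calc a * (5 ^ n * volume (closedBall x ρ))
        ≤ a * (5 ^ n * (2 * volume (closedBall x ρ ∩ {y | β * a < u y}))) := by gcongr
      _ = ((β : ℝ≥0∞)⁻¹ * β) * (a * (5 ^ n *
            (2 * volume (closedBall x ρ ∩ {y | β * a < u y})))) := by rw [hβe, one_mul]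
      _ = 2 * 5 ^ n * (β : ℝ≥0∞)⁻¹ *
            (β * a * volume (closedBall x ρ ∩ {y | β * a < u y})) := by ring
      _ ≤ 2 * 5 ^ n * (β : ℝ≥0∞)⁻¹ * ∫⁻ y in closedBall x ρ, u y := by gcongr
      _ = _ := by push_cast [ENNReal.coe_inv hβ0.ne']; rfl

end Muck

/-! ### Stopping balls and level sets -/

namespace Muck

variable {n : ℕ} {u : En n → ℝ≥0∞} {κ : ℝ} {C : ℝ≥0}

lemma integral_ne_top (h : Muck u κ C) (x : En n) {ρ : ℝ} (hρ : 0 < ρ) :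
    ∫⁻ y in closedBall x ρ, u y ≠ ∞ := by
  rw [← lavg_mul_vol x hρ]
  exact ENNReal.mul_ne_top (h.avg_ne_top x hρ) (vol_fin x ρ)

/-- The stopping-time step. For a.e. point `y` of a ball where `u` exceeds a level `t` above the
average of `u` on the ball, there is a ball `B(c,s)` inside the given one, containing `y`, over which
the average of `u` is comparable to `t`. The candidates are the images of the ball under the
homotheties of centre `y` and ratio `2⁻ᵏ`; these decrease from the whole ball to the point `y`. -/
lemma stopping (h : Muck u κ C) (x : En n) {ρ : ℝ} (hρ : 0 < ρ) {t : ℝ≥0∞}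
    (ht : lavg (closedBall x ρ) u ≤ t) :
    ∀ᵐ y, y ∈ closedBall x ρ → t < u y → ∃ (c : En n) (s : ℝ), 0 < s ∧ s ≤ ρ ∧
      y ∈ closedBall c s ∧ closedBall c s ⊆ closedBall x ρ ∧ t < lavg (closedBall c s) u ∧
      ∫⁻ z in closedBall c s, u z ≤ 2 ^ n * t * volume (closedBall c s) := by
  have hfm : AEMeasurable ((closedBall x ρ).indicator u) volume :=
    (h.meas.indicator measurableSet_closedBall).aemeasurable
  have hfi : ∫⁻ y, (closedBall x ρ).indicator u y ≠ ∞ := by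
    rw [lintegral_indicator measurableSet_closedBall]
    exact h.integral_ne_top x hρ
  filter_upwards [(IsUnifLocDoublingMeasure.vitaliFamily (volume : Measure (En n))
    1).ae_tendsto_lintegral_div hfm hfi] with y hy hyB hty
  set r : ℕ → ℝ := fun k => (1 / 2 : ℝ) ^ k with hr
  have hr0 : ∀ k, 0 < r k := fun k => by positivity
  have hr1 : ∀ k, r (k + 1) = r k / 2 := fun k => by simp only [hr, pow_succ]; ring
  set c : ℕ → En n := fun k => y + r k • (x - y) with hc
  have hxy : ‖x - y‖ ≤ ρ := by rw [← dist_eq_norm, dist_comm]; exact hyB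
  have hmem : ∀ k, y ∈ closedBall (c k) (r k * ρ) := by
    intro k
    rw [mem_closedBall, dist_comm, dist_eq_norm, hc]
    simp only [add_sub_cancel_left, norm_smul, Real.norm_eq_abs, abs_of_pos (hr0 k)]
    exact mul_le_mul_of_nonneg_left hxy (hr0 k).le
  have hstep : ∀ k, closedBall (c (k + 1)) (r (k + 1) * ρ) ⊆ closedBall (c k) (r k * ρ) := by
    intro k
    apply closedBall_subset_closedBall'
    have : dist (c (k + 1)) (c k) = (r k / 2) * ‖x - y‖ := by
      rw [dist_eq_norm, hc]
      simp only [add_sub_add_left_eq_sub, ← sub_smul, norm_smul, Real.norm_eq_abs, hr1]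
      rw [show r k / 2 - r k = -(r k / 2) by ring, abs_neg, abs_of_pos (by have := hr0 k; positivity)]
    rw [this, hr1]
    nlinarith [hr0 k]
  have hsub : ∀ k, closedBall (c k) (r k * ρ) ⊆ closedBall x ρ := by
    intro k
    induction k with
    | zero => simp [hc, hr]
    | succ k ih => exact (hstep k).trans ih
  have hr_t : Filter.Tendsto (fun k => r k * ρ) Filter.atTop (nhdsWithin 0 (Ioi 0)) := by
    refine tendsto_nhdsWithin_iff.2 ⟨?_, Filter.Eventually.of_forall fun k => mul_pos (hr0 k) hρ⟩
    have := (tendsto_pow_atTop_nhds_zero_of_lt_one (r := (1 / 2 : ℝ)) (by norm_num)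
      (by norm_num)).mul_const ρ
    simpa only [zero_mul] using this
  have hlim := hy.comp (IsUnifLocDoublingMeasure.tendsto_closedBall_filterAt volume (K := 1) c
    (fun k => r k * ρ) hr_t (Filter.Eventually.of_forall fun k => by simpa using hmem k))
  rw [indicator_of_mem hyB] at hlim
  have havg : ∀ k, (∫⁻ z in closedBall (c k) (r k * ρ), (closedBall x ρ).indicator u z) /
      volume (closedBall (c k) (r k * ρ)) = lavg (closedBall (c k) (r k * ρ)) u := by
    intro k
    rw [lavg]
    congr 1
    exact setLIntegral_congr_fun measurableSet_closedBall
      fun z hz => indicator_of_mem (hsub k hz) u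
  have hex : ∃ k, t < lavg (closedBall (c k) (r k * ρ)) u := by
    obtain ⟨k, hk⟩ := (hlim.eventually (lt_mem_nhds hty)).exists
    exact ⟨k, by simpa [havg] using hk⟩
  classical
  have hk := Nat.find_spec hex
  have hmin := fun m => Nat.find_min (m := m) hex
  set k := Nat.find hex
  rcases k with _ | k
  · exfalso
    refine absurd hk (not_lt.2 ?_)
    simpa [hc, hr] using ht
  refine ⟨c (k + 1), r (k + 1) * ρ, mul_pos (hr0 _) hρ, ?_, hmem _, hsub _, hk, ?_⟩
  · have : r (k + 1) ≤ 1 := pow_le_one₀ (by norm_num) (by norm_num)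
    nlinarith
  · have hpar := not_lt.1 (hmin k (Nat.lt_succ_self k))
    have hvol : volume (closedBall (c k) (r k * ρ)) =
        2 ^ n * volume (closedBall (c (k + 1)) (r (k + 1) * ρ)) := by
      have := vol_scale (c k) (c (k + 1)) (ρ := r (k + 1) * ρ) (a := 2)
        (mul_pos (hr0 _) hρ).le (by norm_num)
      rw [show r k * ρ = 2 * (r (k + 1) * ρ) by rw [hr1]; ring, this]
      norm_num
    calc ∫⁻ z in closedBall (c (k + 1)) (r (k + 1) * ρ), u z
        ≤ ∫⁻ z in closedBall (c k) (r k * ρ), u z := lintegral_mono_set (hstep k)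
      _ = lavg (closedBall (c k) (r k * ρ)) u * volume (closedBall (c k) (r k * ρ)) :=
          (lavg_mul_vol _ (mul_pos (hr0 _) hρ) _).symm
      _ ≤ t * (2 ^ n * volume (closedBall (c (k + 1)) (r (k + 1) * ρ))) := by
          rw [← hvol]; gcongr
      _ = _ := by ring

/-- The good-`λ` inequality comparing the `u`-mass and the Lebesgue measure of the level sets
of `u` inside a ball. -/
lemma level_set (h : Muck u κ C) :
    ∃ β K : ℝ≥0, 0 < β ∧ β ≤ 1 ∧ ∀ (x : En n) (ρ : ℝ), 0 < ρ → ∀ t : ℝ≥0∞,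
      lavg (closedBall x ρ) u ≤ t →
      ∫⁻ y in closedBall x ρ ∩ {y | t < u y}, u y ≤
        K * t * volume (closedBall x ρ ∩ {y | β * t < u y}) := by
  obtain ⟨β, D, hβ0, hβ1, hlow, hdoub⟩ := h.doubling
  refine ⟨β, D * 2 ^ n * 2, hβ0, hβ1, ?_⟩
  intro x ρ hρ t ht
  have hst := h.stopping x hρ ht
  set P : En n → En n → ℝ → Prop := fun y c s => 0 < s ∧ s ≤ ρ ∧
      y ∈ closedBall c s ∧ closedBall c s ⊆ closedBall x ρ ∧ t < lavg (closedBall c s) u ∧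
      ∫⁻ z in closedBall c s, u z ≤ 2 ^ n * t * volume (closedBall c s) with hP
  set G : Set (En n) := {y | ∃ c s, P y c s} with hG
  have hG' : ∀ y : En n, ∃ (c : En n) (s : ℝ), y ∈ G → P y c s := by
    intro y
    by_cases hy : y ∈ G
    · obtain ⟨c, s, hcs⟩ := hy
      exact ⟨c, s, fun _ => hcs⟩
    · exact ⟨0, 0, fun h => absurd h hy⟩
  choose c s hcs using hG'
  obtain ⟨W, hWG, hdisj, hcov⟩ := Vitali.exists_disjoint_subfamily_covering_enlargement_closedBall
    G c s ρ (fun a ha => (hcs a ha).2.1) 5 (by norm_num)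
  have hWc : W.Countable := by
    refine hdisj.countable_of_nonempty_interior fun i hi => ?_
    exact ⟨c i, ball_subset_interior_closedBall (mem_ball_self (hcs i (hWG hi)).1)⟩
  have hball : ∀ b ∈ W, volume (closedBall (c b) (s b)) ≤
      2 * volume (closedBall (c b) (s b) ∩ {y | β * t < u y}) := by
    intro b hb
    have hb' := hcs b (hWG hb)
    refine (hlow _ _ hb'.1).trans ?_
    gcongr 2 * volume (_ ∩ ?_)
    intro y hy
    exact lt_of_le_of_lt (mul_le_mul' le_rfl hb'.2.2.2.2.1.le) hy
  have hmass : ∀ b ∈ W, ∫⁻ y in closedBall (c b) (5 * s b), u y ≤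
      D * 2 ^ n * 2 * t * volume (closedBall (c b) (s b) ∩ {y | β * t < u y}) := by
    intro b hb
    have hb' := hcs b (hWG hb)
    calc _ ≤ D * ∫⁻ y in closedBall (c b) (s b), u y := hdoub _ _ hb'.1
      _ ≤ D * (2 ^ n * t * (2 * volume (closedBall (c b) (s b) ∩ {y | β * t < u y}))) := by
          gcongr
          exact hb'.2.2.2.2.2.trans (mul_le_mul' le_rfl (hball b hb))
      _ = _ := by ring
  have hmeas : MeasurableSet {y | β * t < u y} := measurableSet_lt measurable_const h.meas
  calc ∫⁻ y in closedBall x ρ ∩ {y | t < u y}, u y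
      ≤ ∫⁻ y in ⋃ b ∈ W, closedBall (c b) (5 * s b), u y := by
        simp_rw [← withDensity_apply' u]
        refine measure_mono_ae ?_
        filter_upwards [withDensity_absolutelyContinuous volume u hst] with y hy hyS
        have hyG : y ∈ G := hy hyS.1 hyS.2
        obtain ⟨b, hb, hsub⟩ := hcov y hyG
        exact mem_biUnion hb (hsub (hcs y hyG).2.2.1)
    _ ≤ ∑' b : W, ∫⁻ y in closedBall (c b) (5 * s b), u y := by
        simp_rw [← withDensity_apply' u]
        exact measure_biUnion_le _ hWc _
    _ ≤ ∑' b : W, D * 2 ^ n * 2 * t * volume (closedBall (c b) (s b) ∩ {y | β * t < u y}) :=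
        ENNReal.tsum_le_tsum fun b => hmass b b.2
    _ = D * 2 ^ n * 2 * t *
          volume (⋃ b ∈ W, (closedBall (c b) (s b) ∩ {y | β * t < u y})) := by
        rw [ENNReal.tsum_mul_left, measure_biUnion hWc
          (hdisj.mono fun b => inter_subset_left)
          (fun b _ => measurableSet_closedBall.inter hmeas)]
    _ ≤ D * 2 ^ n * 2 * t * volume (closedBall x ρ ∩ {y | β * t < u y}) := by
        gcongr
        refine iUnion₂_subset fun b hb => inter_subset_inter_left _ ?_
        exact (hcs b (hWG hb)).2.2.2.1
    _ = _ := by push_cast; rfl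

end Muck

/-! ### The reverse Hölder inequality -/

namespace Muck

variable {n : ℕ} {u : En n → ℝ≥0∞} {κ : ℝ} {C : ℝ≥0}

/-- Reverse Hölder inequality with a small gain `ε`: the good-`λ` inequality is integrated against
`t^(ε-1) dt`, for the truncations of `u`, so that the term to be absorbed is finite. -/
lemma reverse_holder (h : Muck u κ C) :
    ∃ ε : ℝ, 0 < ε ∧ ∀ (x : En n) (ρ : ℝ), 0 < ρ →
      lavg (closedBall x ρ) (fun y => u y ^ (1 + ε)) ≤ 2 * lavg (closedBall x ρ) u ^ (1 + ε) := by
  obtain ⟨β, K, hβ0, hβ1, hlev⟩ := h.level_set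
  have hβ0' : (0 : ℝ) < β := hβ0
  have hβ1' : (β : ℝ) ≤ 1 := hβ1
  -- the size of `ε` that lets the last term be absorbed
  set ε : ℝ := min 1 ((β : ℝ) ^ 2 / (2 * (K + 1))) with hε
  have hε0 : 0 < ε := by positivity
  have hε1 : ε ≤ 1 := min_le_left _ _
  have hεK : K * ε * ((β : ℝ) ^ 2)⁻¹ ≤ 1 / 2 := by
    have h1 : ε ≤ (β : ℝ) ^ 2 / (2 * (K + 1)) := min_le_right _ _
    have hK0 : (0 : ℝ) ≤ K := K.2
    rw [le_div_iff₀ (by positivity)] at h1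
    rw [← div_eq_mul_inv, div_le_iff₀ (by positivity)]
    nlinarith
  refine ⟨ε, hε0, ?_⟩
  intro x ρ hρ
  set B := closedBall x ρ with hB
  set a : ℝ := (lavg B u).toReal with ha
  have ha0 : 0 < a := ENNReal.toReal_pos (h.avg_ne_zero x hρ) (h.avg_ne_top x hρ)
  have haa : ENNReal.ofReal a = lavg B u := ENNReal.ofReal_toReal (h.avg_ne_top x hρ)
  set μ : Measure (En n) := volume.restrict B with hμ
  set ν : Measure (En n) := μ.withDensity u with hν
  have hνuniv : ν univ = ∫⁻ y in B, u y := by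
    rw [hν, withDensity_apply _ MeasurableSet.univ]; simp [hμ]
  have hνfin : ν univ ≠ ∞ := by rw [hνuniv]; exact h.integral_ne_top x hρ
  have hof : ∀ y, ENNReal.ofReal (u y).toReal = u y := fun y => ENNReal.ofReal_toReal (h.ne_top y)
  set I : ℕ → ℝ≥0∞ := fun N => ∫⁻ y, ENNReal.ofReal (min (u y).toReal N ^ ε) ∂ν with hI
  have hmN : ∀ N : ℕ, Measurable fun y => min (u y).toReal (N : ℝ) := fun N =>
    h.meas.ennreal_toReal.min measurable_const
  have hnn : ∀ (N : ℕ) y, 0 ≤ min (u y).toReal (N : ℝ) := fun N y =>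
    le_min ENNReal.toReal_nonneg (Nat.cast_nonneg _)
  have hpt : ∀ (N : ℕ) (t : ℝ), 0 < t →
      ν {y | t < min (u y).toReal (N : ℝ)} * ENNReal.ofReal (t ^ (ε - 1)) ≤
      ν {y | t < (fun _ : En n => a) y} * ENNReal.ofReal (t ^ (ε - 1)) +
        K * (μ {y | t < min (u y).toReal (N : ℝ) / β} * ENNReal.ofReal (t ^ ((1 + ε) - 1))) := by
    intro N t ht0
    rcases lt_or_ge t a with hta | hat
    · refine le_add_right ?_
      exact mul_le_mul' (measure_mono fun y _ => hta) le_rfl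
    · refine le_add_left ?_
      rcases le_or_gt (N : ℝ) t with hNt | htN
      · have : {y | t < min (u y).toReal (N : ℝ)} = ∅ := by
          ext y
          simp only [mem_ofPred_eq, mem_empty_iff_false, iff_false, not_lt]
          exact (min_le_right _ _).trans hNt
        rw [this]; simp
      · have h1 : ν {y | t < min (u y).toReal (N : ℝ)} ≤
            K * ENNReal.ofReal t * volume (B ∩ {y | β * ENNReal.ofReal t < u y}) := by
          refine le_trans ?_ (hlev x ρ hρ (ENNReal.ofReal t) ?_)
          · rw [hν, withDensity_apply _ (measurableSet_lt measurable_const (hmN N)), hμ,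
              Measure.restrict_restrict (measurableSet_lt measurable_const (hmN N)), inter_comm]
            refine lintegral_mono_set (inter_subset_inter_right _ ?_)
            intro y hy
            have hy' : t < min (u y).toReal (N : ℝ) := hy
            change ENNReal.ofReal t < u y
            exact (ENNReal.ofReal_lt_iff_lt_toReal ht0.le (h.ne_top y)).2
              (hy'.trans_le (min_le_left _ _))
          · rw [← haa]; exact ENNReal.ofReal_le_ofReal hat
        have h2 : volume (B ∩ {y | β * ENNReal.ofReal t < u y}) ≤
            μ {y | t < min (u y).toReal (N : ℝ) / β} := by
          rw [hμ, Measure.restrict_apply' measurableSet_closedBall, inter_comm]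
          apply measure_mono
          apply inter_subset_inter_left
          intro y hy
          have hy' : β * ENNReal.ofReal t < u y := hy
          change t < min (u y).toReal (N : ℝ) / β
          rw [lt_div_iff₀ hβ0', lt_min_iff]
          constructor
          · rw [mul_comm]
            apply (ENNReal.ofReal_lt_iff_lt_toReal (by positivity) (h.ne_top y)).1
            rwa [ENNReal.ofReal_mul hβ0'.le, ENNReal.ofReal_coe_nnreal]
          · nlinarith
        calc _ ≤ (K * ENNReal.ofReal t * μ {y | t < min (u y).toReal (N : ℝ) / β}) *
              ENNReal.ofReal (t ^ (ε - 1)) := by gcongr; exact h1.trans (by gcongr)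
          _ = K * (μ {y | t < min (u y).toReal (N : ℝ) / β} *
              (ENNReal.ofReal t * ENNReal.ofReal (t ^ (ε - 1)))) := by ring
          _ = _ := by
              rw [← ENNReal.ofReal_mul ht0.le]
              congr 4
              rw [show (1 + ε) - 1 = 1 + (ε - 1) by ring, Real.rpow_add ht0, Real.rpow_one]
  have hbound : ∀ N : ℕ, I N ≤ ENNReal.ofReal (a ^ ε) * ν univ + 2⁻¹ * I N := by
    intro N
    have hlc2 := lintegral_rpow_eq_lintegral_meas_lt_mul μ
      (f := fun y => min (u y).toReal (N : ℝ) / β)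
      (Filter.Eventually.of_forall fun y => div_nonneg (hnn N y) hβ0'.le)
      ((hmN N).div_const _).aemeasurable (p := 1 + ε) (by positivity)
    have hlc1 := lintegral_rpow_eq_lintegral_meas_lt_mul ν
      (f := fun _ => a) (Filter.Eventually.of_forall fun y => ha0.le)
      aemeasurable_const hε0
    rw [lintegral_const] at hlc1
    have hlast : ∫⁻ y, ENNReal.ofReal ((min (u y).toReal (N : ℝ) / β) ^ (1 + ε)) ∂μ ≤
        ENNReal.ofReal (((β : ℝ) ^ 2)⁻¹) * I N := by
      rw [hI]
      simp only
      rw [hν, lintegral_withDensity_eq_lintegral_mul _ h.meas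
        ((hmN N).pow_const ε).ennreal_ofReal, ← lintegral_const_mul _
        (h.meas.mul ((hmN N).pow_const ε).ennreal_ofReal)]
      refine lintegral_mono fun y => ?_
      simp only [Pi.mul_apply]
      rw [← hof y, ← ENNReal.ofReal_mul ENNReal.toReal_nonneg, ← ENNReal.ofReal_mul (by positivity),
        hof y]
      apply ENNReal.ofReal_le_ofReal
      have hm := hnn N y
      have hmε : 0 ≤ min (u y).toReal (N : ℝ) ^ ε := Real.rpow_nonneg hm _
      rw [Real.div_rpow hm hβ0'.le, div_eq_inv_mul]
      have h1 : ((β : ℝ) ^ (1 + ε))⁻¹ ≤ ((β : ℝ) ^ 2)⁻¹ := by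
        apply inv_anti₀ (by positivity)
        rw [← Real.rpow_natCast]
        exact Real.rpow_le_rpow_of_exponent_ge hβ0' hβ1' (by push_cast; linarith)
      have h2 : min (u y).toReal (N : ℝ) ^ (1 + ε) ≤
          (u y).toReal * min (u y).toReal (N : ℝ) ^ ε := by
        rw [Real.rpow_add_of_nonneg hm (by norm_num) hε0.le, Real.rpow_one]
        exact mul_le_mul_of_nonneg_right (min_le_left _ _) hmε
      gcongr
    have hmeasμ : Measurable fun t : ℝ => μ {y | t < min (u y).toReal (N : ℝ) / β} *
        ENNReal.ofReal (t ^ ((1 + ε) - 1)) := by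
      refine Measurable.mul (Antitone.measurable fun s t hst => measure_mono fun y hy => ?_)
        (measurable_id.pow_const _).ennreal_ofReal
      exact lt_of_le_of_lt hst hy
    calc I N = ENNReal.ofReal ε * ∫⁻ t in Ioi (0 : ℝ),
          ν {y | t < min (u y).toReal (N : ℝ)} * ENNReal.ofReal (t ^ (ε - 1)) :=
          lintegral_rpow_eq_lintegral_meas_lt_mul ν
            (Filter.Eventually.of_forall fun y => hnn N y) (hmN N).aemeasurable hε0
      _ ≤ ENNReal.ofReal ε * ∫⁻ t in Ioi (0 : ℝ),
          (ν {y | t < (fun _ : En n => a) y} * ENNReal.ofReal (t ^ (ε - 1)) +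
          K * (μ {y | t < min (u y).toReal (N : ℝ) / β} *
            ENNReal.ofReal (t ^ ((1 + ε) - 1)))) := by
          refine mul_le_mul' le_rfl ?_
          exact setLIntegral_mono' measurableSet_Ioi fun t ht => hpt N t ht
      _ = ENNReal.ofReal (a ^ ε) * ν univ + K * (ENNReal.ofReal ε * ∫⁻ t in Ioi (0 : ℝ),
          μ {y | t < min (u y).toReal (N : ℝ) / β} * ENNReal.ofReal (t ^ ((1 + ε) - 1))) := by
          rw [lintegral_add_right _ (hmeasμ.const_mul _), mul_add, ← hlc1,
            lintegral_const_mul _ hmeasμ]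
          ring
      _ ≤ ENNReal.ofReal (a ^ ε) * ν univ + K * (ENNReal.ofReal ε *
            (ENNReal.ofReal (((β : ℝ) ^ 2)⁻¹) * I N)) := by
          refine add_le_add le_rfl (mul_le_mul' le_rfl ?_)
          refine le_trans ?_ (mul_le_mul' le_rfl hlast)
          rw [hlc2]
          refine mul_le_mul' le_rfl (le_mul_of_one_le_left zero_le ?_)
          rw [← ENNReal.ofReal_one]
          exact ENNReal.ofReal_le_ofReal (by linarith)
      _ = ENNReal.ofReal (a ^ ε) * ν univ + ENNReal.ofReal (K * ε * ((β : ℝ) ^ 2)⁻¹) * I N := by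
          rw [ENNReal.ofReal_mul (by positivity), ENNReal.ofReal_mul (by positivity),
            ENNReal.ofReal_coe_nnreal]
          ring
      _ ≤ _ := by
          gcongr
          calc _ ≤ ENNReal.ofReal (1 / 2) := ENNReal.ofReal_le_ofReal hεK
            _ = _ := by rw [one_div, ENNReal.ofReal_inv_of_pos (by norm_num)]; norm_num
  have hI2 : ∀ N : ℕ, I N ≤ 2 * (ENNReal.ofReal (a ^ ε) * ν univ) := by
    intro N
    have hfin : I N ≠ ∞ := by
      refine ne_top_of_le_ne_top
        (ENNReal.mul_ne_top (ENNReal.ofReal_ne_top (r := (N : ℝ) ^ ε)) hνfin) ?_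
      rw [← lintegral_const]
      refine lintegral_mono fun y => ENNReal.ofReal_le_ofReal ?_
      exact Real.rpow_le_rpow (hnn N y) (min_le_right _ _) hε0.le
    have hhalf : 2⁻¹ * I N ≠ ∞ := ENNReal.mul_ne_top (by norm_num) hfin
    have h1 : 2⁻¹ * I N ≤ ENNReal.ofReal (a ^ ε) * ν univ := by
      have h2 : 2⁻¹ * I N + 2⁻¹ * I N = I N := by
        rw [← add_mul, ENNReal.inv_two_add_inv_two, one_mul]
      have h3 := hbound N
      nth_rewrite 1 [← h2] at h3
      exact (ENNReal.add_le_add_iff_right hhalf).1 h3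
    calc I N = 2 * (2⁻¹ * I N) := by
          rw [← mul_assoc, ENNReal.mul_inv_cancel (by norm_num) (by norm_num), one_mul]
      _ ≤ _ := by gcongr
  have hfinal : ∫⁻ y in B, u y ^ (1 + ε) ≤ 2 * (lavg B u ^ ε * ∫⁻ y in B, u y) := by
    have h1 : ∫⁻ y in B, u y ^ (1 + ε) = ∫⁻ y, u y ^ ε ∂ν := by
      rw [hν, lintegral_withDensity_eq_lintegral_mul _ h.meas (h.meas.pow_const ε)]
      refine lintegral_congr fun y => ?_
      rw [ENNReal.rpow_add _ _ (h.ne_zero y) (h.ne_top y), ENNReal.rpow_one]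
      rfl
    have h2 : ∫⁻ y, u y ^ ε ∂ν ≤
        ∫⁻ y, ⨆ N : ℕ, ENNReal.ofReal (min (u y).toReal N ^ ε) ∂ν := by
      refine lintegral_mono fun y => ?_
      obtain ⟨N, hN⟩ := exists_nat_ge (u y).toReal
      refine le_iSup_of_le N ?_
      rw [min_eq_left hN, ← ENNReal.ofReal_rpow_of_nonneg ENNReal.toReal_nonneg hε0.le, hof]
    rw [h1]
    refine h2.trans ?_
    rw [lintegral_iSup (fun N => ((hmN N).pow_const ε).ennreal_ofReal) (fun M N hMN y =>
      ENNReal.ofReal_le_ofReal (Real.rpow_le_rpow (hnn M y)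
        (min_le_min le_rfl (by exact_mod_cast hMN)) hε0.le))]
    refine iSup_le fun N => ?_
    rw [← haa, ENNReal.ofReal_rpow_of_nonneg ha0.le hε0.le, ← hνuniv]
    exact hI2 N
  calc lavg B (fun y => u y ^ (1 + ε)) ≤ (2 * (lavg B u ^ ε * ∫⁻ y in B, u y)) / volume B :=
        ENNReal.div_le_div_right hfinal _
    _ = 2 * (lavg B u ^ ε * lavg B u) := by rw [mul_div_assoc, mul_div_assoc]; rfl
    _ = _ := by
        rw [add_comm, ENNReal.rpow_add _ _ (h.avg_ne_zero x hρ) (h.avg_ne_top x hρ),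
          ENNReal.rpow_one]

end Muck

/-! ### Openness of the weight classes -/

namespace Muck

variable {n : ℕ} {u : En n → ℝ≥0∞} {κ : ℝ} {C : ℝ≥0}

/-- The dual weight `u^(-κ)` satisfies the Muckenhoupt condition with dual exponent `1/κ`. -/
lemma dual (h : Muck u κ C) : Muck (fun y => u y ^ (-κ)) (1 / κ) (C ^ κ) where
  meas := h.meas_dual
  ne_zero := h.dual_ne_zero
  ne_top := h.dual_ne_top
  pos := by have := h.pos; positivity
  bound := by
    intro x ρ hρ
    have hk := h.pos
    have h1 : (fun y => (u y ^ (-κ)) ^ (-(1 / κ))) = u := by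
      funext y
      rw [← ENNReal.rpow_mul, neg_mul_neg, mul_one_div_cancel hk.ne', ENNReal.rpow_one]
    rw [h1, one_div_one_div]
    calc _ = (lavg (closedBall x ρ) u *
          lavg (closedBall x ρ) (fun y => u y ^ (-κ)) ^ (1 / κ)) ^ κ := by
          rw [ENNReal.mul_rpow_of_nonneg _ _ hk.le, ← ENNReal.rpow_mul, one_div_mul_cancel hk.ne',
            ENNReal.rpow_one, mul_comm]
      _ ≤ (C : ℝ≥0∞) ^ κ := ENNReal.rpow_le_rpow (h.bound x ρ hρ) hk.le
      _ = _ := (ENNReal.coe_rpow_of_nonneg _ hk.le).symm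

/-- Openness of the Muckenhoupt condition: reverse Hölder for the dual weight. -/
lemma open_dual (h : Muck u κ C) : ∃ κ₁ > κ, ∃ C₁ : ℝ≥0, Muck u κ₁ C₁ := by
  obtain ⟨ε, hε, hR⟩ := h.dual.reverse_holder
  have hk := h.pos
  have hk1 : 0 < κ * (1 + ε) := by positivity
  refine ⟨κ * (1 + ε), by nlinarith, 2 ^ (1 / (κ * (1 + ε))) * C,
    h.meas, h.ne_zero, h.ne_top, hk1, ?_⟩
  intro x ρ hρ
  have h1 : (fun y => u y ^ (-(κ * (1 + ε)))) = fun y => (u y ^ (-κ)) ^ (1 + ε) := by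
    funext y
    rw [← ENNReal.rpow_mul, neg_mul]
  rw [h1]
  calc _ ≤ lavg (closedBall x ρ) u * (2 * lavg (closedBall x ρ) (fun y => u y ^ (-κ)) ^ (1 + ε)) ^
        (1 / (κ * (1 + ε))) := by
        refine mul_le_mul' le_rfl (ENNReal.rpow_le_rpow (hR x ρ hρ) (by positivity))
    _ = 2 ^ (1 / (κ * (1 + ε))) * (lavg (closedBall x ρ) u *
          lavg (closedBall x ρ) (fun y => u y ^ (-κ)) ^ (1 / κ)) := by
        rw [ENNReal.mul_rpow_of_nonneg _ _ (by positivity), ← ENNReal.rpow_mul,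
          show (1 + ε) * (1 / (κ * (1 + ε))) = 1 / κ by field_simp]
        ring
    _ ≤ 2 ^ (1 / (κ * (1 + ε))) * C := by gcongr; exact h.bound x ρ hρ
    _ = _ := by
        push_cast [ENNReal.coe_rpow_of_nonneg _ (show (0 : ℝ) ≤ 1 / (κ * (1 + ε)) by positivity)]
        rfl

/-- Openness of the reverse Hölder condition for a Muckenhoupt weight: if `u` lies in `RH_σ`
then `u^σ` is again a Muckenhoupt weight, and has a reverse Hölder inequality of its own. -/
lemma open_RH (h : Muck u κ C) {σ : ℝ} (hσ : 1 ≤ σ) {R : ℝ≥0}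
    (hR : ∀ (x : En n) (ρ : ℝ), 0 < ρ →
      lavg (closedBall x ρ) (fun y => u y ^ σ) ^ (1 / σ) ≤ R * lavg (closedBall x ρ) u) :
    ∃ σ₁ > σ, ∃ R₁ : ℝ≥0, ∀ (x : En n) (ρ : ℝ), 0 < ρ →
      lavg (closedBall x ρ) (fun y => u y ^ σ₁) ^ (1 / σ₁) ≤ R₁ * lavg (closedBall x ρ) u := by
  have hk := h.pos
  have hσ0 : 0 < σ := by linarith
  have hm : Muck (fun y => u y ^ σ) (κ / σ) ((R * C) ^ σ) := by
    refine ⟨h.meas.pow_const _, fun y => ?_, fun y => ?_, by positivity, ?_⟩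
    · simp [ENNReal.rpow_eq_zero_iff, h.ne_zero y, h.ne_top y]
    · simp [ENNReal.rpow_eq_top_iff, h.ne_zero y, h.ne_top y]
    intro x ρ hρ
    have h1 : (fun y => (u y ^ σ) ^ (-(κ / σ))) = fun y => u y ^ (-κ) := by
      funext y
      rw [← ENNReal.rpow_mul]
      congr 1
      field_simp
    rw [h1]
    have h2 : lavg (closedBall x ρ) (fun y => u y ^ σ) ≤ (R * lavg (closedBall x ρ) u) ^ σ := by
      calc _ = (lavg (closedBall x ρ) (fun y => u y ^ σ) ^ (1 / σ)) ^ σ := by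
            rw [← ENNReal.rpow_mul, one_div_mul_cancel hσ0.ne', ENNReal.rpow_one]
        _ ≤ _ := ENNReal.rpow_le_rpow (hR x ρ hρ) hσ0.le
    calc _ ≤ (R * lavg (closedBall x ρ) u) ^ σ *
          lavg (closedBall x ρ) (fun y => u y ^ (-κ)) ^ (1 / (κ / σ)) := mul_le_mul' h2 le_rfl
      _ = (R * (lavg (closedBall x ρ) u *
          lavg (closedBall x ρ) (fun y => u y ^ (-κ)) ^ (1 / κ))) ^ σ := by
          rw [← mul_assoc, ENNReal.mul_rpow_of_nonneg _ (_ ^ (1 / κ)) hσ0.le, ← ENNReal.rpow_mul]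
          congr 2
          field_simp
      _ ≤ (R * C) ^ σ := by
          gcongr
          exact h.bound x ρ hρ
      _ = _ := by rw [← ENNReal.coe_mul, ENNReal.coe_rpow_of_nonneg _ hσ0.le]
  obtain ⟨ε, hε, hE⟩ := hm.reverse_holder
  refine ⟨σ * (1 + ε), by nlinarith, 2 ^ (1 / (σ * (1 + ε))) * R, ?_⟩
  intro x ρ hρ
  have h1 : (fun y => u y ^ (σ * (1 + ε))) = fun y => (u y ^ σ) ^ (1 + ε) := by
    funext y
    rw [← ENNReal.rpow_mul]
  rw [h1]
  have hp : (0 : ℝ) ≤ 1 / (σ * (1 + ε)) := by positivity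
  calc _ ≤ (2 * lavg (closedBall x ρ) (fun y => u y ^ σ) ^ (1 + ε)) ^ (1 / (σ * (1 + ε))) :=
        ENNReal.rpow_le_rpow (hE x ρ hρ) hp
    _ = 2 ^ (1 / (σ * (1 + ε))) * lavg (closedBall x ρ) (fun y => u y ^ σ) ^ (1 / σ) := by
        rw [ENNReal.mul_rpow_of_nonneg _ _ hp, ← ENNReal.rpow_mul,
          show (1 + ε) * (1 / (σ * (1 + ε))) = 1 / σ by field_simp]
    _ ≤ 2 ^ (1 / (σ * (1 + ε))) * (R * lavg (closedBall x ρ) u) := by gcongr; exact hR x ρ hρ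
    _ = _ := by
        rw [← mul_assoc]
        push_cast [ENNReal.coe_rpow_of_nonneg _ hp]
        rfl

end Muck

/-! ### Hölder's inequality between weighted averages and unweighted norms -/

/-- Hölder's inequality for a lower integral: only one of the two factors has to be measurable. -/
lemma holder_nonmeas {α : Type*} [MeasurableSpace α] (μ : Measure α) {a b : ℝ}
    (hab : a.HolderConjugate b) (F : α → ℝ≥0∞) {v : α → ℝ≥0∞} (hv : Measurable v)
    (h0 : ∀ x, v x ≠ 0) (ht : ∀ x, v x ≠ ∞) :
    ∫⁻ x, F x * v x ∂μ ≤ (∫⁻ x, F x ^ a ∂μ) ^ (1 / a) * (∫⁻ x, v x ^ b ∂μ) ^ (1 / b) := by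
  obtain ⟨g, hg, hgle, hgeq⟩ := exists_measurable_le_lintegral_eq μ fun x => F x * v x
  rw [hgeq]
  have h1 : ∀ x, g x = (fun x => g x / v x) x * v x := fun x =>
    (ENNReal.div_mul_cancel (h0 x) (ht x)).symm
  have ha : 0 < a := hab.pos
  calc ∫⁻ x, g x ∂μ = ∫⁻ x, ((fun x => g x / v x) * v) x ∂μ := lintegral_congr h1
    _ ≤ (∫⁻ x, (g x / v x) ^ a ∂μ) ^ (1 / a) * (∫⁻ x, v x ^ b ∂μ) ^ (1 / b) :=
        ENNReal.lintegral_mul_le_Lp_mul_Lq μ hab (hg.div hv).aemeasurable hv.aemeasurable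
    _ ≤ _ := by
        gcongr with x
        exact ENNReal.div_le_of_le_mul (hgle x)

lemma setAvg_eq {n : ℕ} {u : En n → ℝ≥0∞} (hm : Measurable u) (ht : ∀ x, u x ≠ ∞)
    {S : Set (En n)} (hS : MeasurableSet S) (N : Set (En n)) {p : ℝ} (hp : 0 < p)
    (g : En n → ℝ) :
    setAvg (volume.withDensity u) S N (ENNReal.ofReal p) g =
      ((volume.withDensity u N)⁻¹ * ∫⁻ y in S, ‖g y‖ₑ ^ p * u y) ^ (1 / p) := by
  rw [setAvg, eLpNorm_eq_lintegral_rpow_enorm_toReal (by simpa using hp) ENNReal.ofReal_ne_top,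
    ENNReal.toReal_ofReal hp.le, lintegral_smul_measure, restrict_withDensity hS,
    lintegral_withDensity_eq_lintegral_mul_non_measurable _ hm
      (Filter.Eventually.of_forall fun x => (ht x).lt_top)]
  simp only [Pi.mul_apply, smul_eq_mul, mul_comm]

lemma vol_ball_eq {n : ℕ} (x : En n) {ρ : ℝ} (hρ : 0 < ρ) :
    volume (ball x ρ) = volume (closedBall x ρ) := by
  refine le_antisymm (measure_mono ball_subset_closedBall) ?_
  rw [← ball_union_sphere]
  refine (measure_union_le _ _).trans ?_
  rw [Measure.addHaar_sphere_of_ne_zero volume x hρ.ne', add_zero]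

lemma lavg_ball_mul_vol {n : ℕ} (x : En n) {ρ : ℝ} (hρ : 0 < ρ) (g : En n → ℝ≥0∞) :
    lavg (closedBall x ρ) g * volume (ball x ρ) = ∫⁻ y in ball x ρ, g y := by
  rw [← lavg_ball_eq x hρ]
  exact ENNReal.div_mul_cancel (measure_ball_pos volume x hρ).ne' measure_ball_lt_top.ne

/-- A reverse Hölder weight allows to pass from a weighted `L^q` average to an unweighted
`L^{q₁}` norm with `q₁ = q σ'`. -/
lemma upper {n : ℕ} {u : En n → ℝ≥0∞} {κ : ℝ} {C : ℝ≥0} (h : Muck u κ C) {σ q q₁ : ℝ}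
    (hσ : 1 < σ) (hq : 0 < q) (hq₁ : q₁ = q * (σ / (σ - 1))) {R : ℝ≥0}
    (hR : ∀ (x : En n) (ρ : ℝ), 0 < ρ →
      lavg (closedBall x ρ) (fun y => u y ^ σ) ^ (1 / σ) ≤ R * lavg (closedBall x ρ) u)
    (x : En n) {ρ : ℝ} (hρ : 0 < ρ) {S : Set (En n)} (hS : MeasurableSet S) (hSN : S ⊆ ball x ρ)
    (g : En n → ℝ) :
    setAvg (volume.withDensity u) S (ball x ρ) (ENNReal.ofReal q) g ≤
      (R : ℝ≥0∞) ^ (1 / q) * volume (ball x ρ) ^ (-(1 / q₁)) *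
        eLpNorm g (ENNReal.ofReal q₁) (volume.restrict S) := by
  have hσ1 : 0 < σ - 1 := by linarith
  have hq₁0 : 0 < q₁ := by rw [hq₁]; positivity
  set V := volume (ball x ρ) with hV
  have hV0 : V ≠ 0 := (measure_ball_pos volume x hρ).ne'
  have hVt : V ≠ ∞ := measure_ball_lt_top.ne
  set M := lavg (closedBall x ρ) u with hM
  have hM0 : M ≠ 0 := h.avg_ne_zero x hρ
  have hMt : M ≠ ∞ := h.avg_ne_top x hρ
  have hνN : volume.withDensity u (ball x ρ) = M * V := by
    rw [withDensity_apply _ measurableSet_ball, lavg_ball_mul_vol x hρ]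
  have hconj : (σ / (σ - 1)).HolderConjugate σ :=
    (Real.HolderConjugate.conjExponent hσ).symm
  rw [setAvg_eq h.meas h.ne_top hS _ hq, hνN,
    eLpNorm_eq_lintegral_rpow_enorm_toReal (by simpa using hq₁0) ENNReal.ofReal_ne_top,
    ENNReal.toReal_ofReal hq₁0.le]
  set X := ∫⁻ y in S, ‖g y‖ₑ ^ q₁ with hX
  have h1 : ∫⁻ y in S, ‖g y‖ₑ ^ q * u y ≤ X ^ (q / q₁) * (V ^ (1 / σ) * (R * M)) := by
    refine (holder_nonmeas _ hconj _ h.meas h.ne_zero h.ne_top).trans ?_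
    refine mul_le_mul' (le_of_eq ?_) ?_
    · simp only [← ENNReal.rpow_mul, ← hq₁]
      congr 1
      rw [hq₁]; field_simp
    · calc (∫⁻ y in S, u y ^ σ) ^ (1 / σ) ≤ (∫⁻ y in ball x ρ, u y ^ σ) ^ (1 / σ) :=
            ENNReal.rpow_le_rpow (lintegral_mono_set hSN) (by positivity)
        _ = V ^ (1 / σ) * lavg (closedBall x ρ) (fun y => u y ^ σ) ^ (1 / σ) := by
            rw [← lavg_ball_mul_vol x hρ, mul_comm, ENNReal.mul_rpow_of_nonneg _ _ (by positivity)]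
        _ ≤ _ := by gcongr; exact hR x ρ hρ
  calc ((M * V)⁻¹ * ∫⁻ y in S, ‖g y‖ₑ ^ q * u y) ^ (1 / q)
      ≤ ((M * V)⁻¹ * (X ^ (q / q₁) * (V ^ (1 / σ) * (R * M)))) ^ (1 / q) :=
        ENNReal.rpow_le_rpow (mul_le_mul' le_rfl h1) (by positivity)
    _ = (R * (V ^ (-(q / q₁)) * X ^ (q / q₁))) ^ (1 / q) := by
        congr 1
        have h2 : (-(q / q₁)) = -1 + 1 / σ := by rw [hq₁]; field_simp; ring
        rw [h2, ENNReal.rpow_add _ _ hV0 hVt, ENNReal.rpow_neg_one,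
          ENNReal.mul_inv (Or.inl hM0) (Or.inl hMt)]
        calc _ = (M⁻¹ * M) * (R * (V⁻¹ * V ^ (1 / σ) * X ^ (q / q₁))) := by ring
          _ = _ := by rw [ENNReal.inv_mul_cancel hM0 hMt, one_mul]
    _ = _ := by
        rw [ENNReal.mul_rpow_of_nonneg _ _ (by positivity),
          ENNReal.mul_rpow_of_nonneg _ _ (by positivity), ← ENNReal.rpow_mul, ← ENNReal.rpow_mul,
          mul_assoc]
        congr 3 <;> field_simp

/-- A Muckenhoupt weight allows to pass from an unweighted `L^{p₁}` norm to a weighted `L^p`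
average, where `p₁ = p / s` for the Muckenhoupt exponent `s = 1 + 1/κ`. -/
lemma lower {n : ℕ} {u : En n → ℝ≥0∞} {κ : ℝ} {C : ℝ≥0} (h : Muck u κ C) {p p₁ : ℝ}
    (hp₁ : 0 < p₁) (hp : p = p₁ * (1 + 1 / κ))
    (x : En n) {ρ : ℝ} (hρ : 0 < ρ) {S : Set (En n)} (hS : MeasurableSet S) (hSN : S ⊆ ball x ρ)
    (f : En n → ℝ) :
    eLpNorm f (ENNReal.ofReal p₁) (volume.restrict S) ≤
      (C : ℝ≥0∞) ^ (1 / p) * volume (ball x ρ) ^ (1 / p₁) *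
        setAvg (volume.withDensity u) S (ball x ρ) (ENNReal.ofReal p) f := by
  have hk := h.pos
  have hp0 : 0 < p := by rw [hp]; positivity
  set V := volume (ball x ρ) with hV
  have hV0 : V ≠ 0 := (measure_ball_pos volume x hρ).ne'
  have hVt : V ≠ ∞ := measure_ball_lt_top.ne
  set M := lavg (closedBall x ρ) u with hM
  have hM0 : M ≠ 0 := h.avg_ne_zero x hρ
  have hMt : M ≠ ∞ := h.avg_ne_top x hρ
  have hνN : volume.withDensity u (ball x ρ) = M * V := by
    rw [withDensity_apply _ measurableSet_ball, lavg_ball_mul_vol x hρ]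
  have hconj : (1 + 1 / κ).HolderConjugate (1 + κ) := by
    rw [Real.holderConjugate_iff]
    have : 0 < 1 / κ := by positivity
    refine ⟨by linarith, ?_⟩
    field_simp
    ring
  rw [setAvg_eq h.meas h.ne_top hS _ hp0, hνN,
    eLpNorm_eq_lintegral_rpow_enorm_toReal (by simpa using hp₁) ENNReal.ofReal_ne_top,
    ENNReal.toReal_ofReal hp₁.le]
  set Y := ∫⁻ y in S, ‖f y‖ₑ ^ p * u y with hY
  set e : ℝ := p₁ / p with he
  have he0 : 0 < e := by positivity
  have he1 : e = κ / (1 + κ) := by rw [he, hp]; field_simp; ring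
  have h1 : ∫⁻ y in S, ‖f y‖ₑ ^ p₁ ≤ Y ^ e * (V ^ (1 / (1 + κ)) * (C / M) ^ e) := by
    have h2 : ∀ y, ‖f y‖ₑ ^ p₁ = (‖f y‖ₑ ^ p₁ * u y ^ e) * u y ^ (-e) := by
      intro y
      rw [mul_assoc, ← ENNReal.rpow_add _ _ (h.ne_zero y) (h.ne_top y)]
      simp
    rw [lintegral_congr h2]
    refine (holder_nonmeas _ hconj _ (h.meas.pow_const (-e)) (fun y => ?_) (fun y => ?_)).trans ?_
    · simp [ENNReal.rpow_eq_zero_iff, h.ne_zero y, h.ne_top y]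
    · simp [ENNReal.rpow_eq_top_iff, h.ne_zero y, h.ne_top y]
    refine mul_le_mul' (le_of_eq ?_) ?_
    · have h3 : 1 / (1 + 1 / κ) = e := by rw [he1]; field_simp; ring
      rw [h3]
      congr 1
      refine lintegral_congr fun y => ?_
      rw [ENNReal.mul_rpow_of_nonneg _ _ (by positivity), ← ENNReal.rpow_mul, ← ENNReal.rpow_mul,
        ← hp, ← h3, one_div_mul_cancel (by positivity), ENNReal.rpow_one]
    · have h3 : ∀ y, (u y ^ (-e)) ^ (1 + κ) = u y ^ (-κ) := by
        intro y
        rw [← ENNReal.rpow_mul]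
        congr 1
        rw [he1]; field_simp
      calc (∫⁻ y in S, (u y ^ (-e)) ^ (1 + κ)) ^ (1 / (1 + κ))
          = (∫⁻ y in S, u y ^ (-κ)) ^ (1 / (1 + κ)) := by simp_rw [h3]
        _ ≤ (∫⁻ y in ball x ρ, u y ^ (-κ)) ^ (1 / (1 + κ)) :=
            ENNReal.rpow_le_rpow (lintegral_mono_set hSN) (by positivity)
        _ = V ^ (1 / (1 + κ)) *
              lavg (closedBall x ρ) (fun y => u y ^ (-κ)) ^ (1 / (1 + κ)) := by
            rw [← lavg_ball_mul_vol x hρ, mul_comm, ENNReal.mul_rpow_of_nonneg _ _ (by positivity)]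
        _ ≤ V ^ (1 / (1 + κ)) * ((C / M) ^ κ) ^ (1 / (1 + κ)) := by
            gcongr; exact h.dual_le x hρ
        _ = _ := by
            rw [← ENNReal.rpow_mul]
            congr 2
            rw [he1]; ring
  calc (∫⁻ y in S, ‖f y‖ₑ ^ p₁) ^ (1 / p₁)
      ≤ (Y ^ e * (V ^ (1 / (1 + κ)) * (C / M) ^ e)) ^ (1 / p₁) :=
        ENNReal.rpow_le_rpow h1 (by positivity)
    _ = (V * (C * ((M * V)⁻¹ * Y)) ^ e) ^ (1 / p₁) := by
        congr 1
        have h2 : 1 / (1 + κ) = 1 + (-e) := by rw [he1]; field_simp; ring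
        rw [h2, ENNReal.rpow_add _ _ hV0 hVt, ENNReal.rpow_one,
          ENNReal.mul_inv (Or.inl hM0) (Or.inl hMt), ENNReal.rpow_neg, ← ENNReal.inv_rpow]
        simp only [ENNReal.mul_rpow_of_nonneg _ _ he0.le, div_eq_mul_inv]
        ring
    _ = _ := by
        rw [ENNReal.mul_rpow_of_nonneg _ _ (by positivity), ← ENNReal.rpow_mul,
          show e * (1 / p₁) = 1 / p by rw [he]; field_simp,
          ENNReal.mul_rpow_of_nonneg _ _ (by positivity)]
        ring

/-! ### Off-diagonal estimates and scaling -/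

/-- The off-diagonal estimate applied to a function supported in `S ⊆ E`, with a lower bound for
the distance in place of the distance itself. If `E` or `F` is empty, then `setD E F` has
the junk value `0`, but the estimate is trivial. -/
lemma off_diag {n : ℕ} {T : ℝ → (En n → ℝ) → (En n → ℝ)} {p₁ q₁ c C α : ℝ}
    (hc : 0 < c) (hC : 0 < C) (hp₁ : 0 < p₁) (hq₁ : 0 < q₁)
    (hα : α = n / p₁ - n / q₁)
    (hT : ∀ t : ℝ, 0 < t → ∀ E F : Set (En n), IsClosed E → IsClosed F → ∀ f : En n → ℝ,
      eLpNorm (T t (E.indicator f)) (ENNReal.ofReal q₁) (volume.restrict F)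
        ≤ ENNReal.ofReal
            (C * t ^ (-(((n : ℝ) * ((ENNReal.ofReal p₁)⁻¹).toReal -
              (n : ℝ) * ((ENNReal.ofReal q₁)⁻¹).toReal) / 2)) *
              Real.exp (-c * setD E F ^ 2 / t)) *
          eLpNorm f (ENNReal.ofReal p₁) (volume.restrict E))
    {t : ℝ} (ht : 0 < t) {S E S' F : Set (En n)} (hE : IsClosed E) (hF : IsClosed F)
    (hS : MeasurableSet S) (hSE : S ⊆ E) (hSF : S' ⊆ F) {d : ℝ} (hd0 : 0 ≤ d)
    (hd : ∀ a ∈ E, ∀ b ∈ F, d ≤ dist a b) (f : En n → ℝ) :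
    eLpNorm (T t (S.indicator f)) (ENNReal.ofReal q₁) (volume.restrict S') ≤
      ENNReal.ofReal (C * t ^ (-(α / 2)) * Real.exp (-c * d ^ 2 / t)) *
        eLpNorm f (ENNReal.ofReal p₁) (volume.restrict S) := by
  have h1 : E.indicator (S.indicator f) = S.indicator f := by
    rw [indicator_indicator, inter_eq_self_of_subset_right hSE]
  have h2 : eLpNorm (S.indicator f) (ENNReal.ofReal p₁) (volume.restrict E) =
      eLpNorm f (ENNReal.ofReal p₁) (volume.restrict S) := by
    rw [eLpNorm_indicator_eq_eLpNorm_restrict hS, Measure.restrict_restrict hS,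
      inter_eq_self_of_subset_left hSE]
  have hexp : (-(((n : ℝ) * ((ENNReal.ofReal p₁)⁻¹).toReal -
      (n : ℝ) * ((ENNReal.ofReal q₁)⁻¹).toReal) / 2)) = -(α / 2) := by
    rw [hα, ENNReal.toReal_inv, ENNReal.toReal_inv, ENNReal.toReal_ofReal hp₁.le,
      ENNReal.toReal_ofReal hq₁.le]
    rfl
  have h3 := hT t ht E F hE hF (S.indicator f)
  rw [h1, h2, hexp] at h3
  rcases F.eq_empty_or_nonempty with rfl | ⟨b, hb⟩
  · rw [subset_empty_iff.1 hSF]; simp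
  rcases E.eq_empty_or_nonempty with rfl | ⟨a, ha⟩
  · obtain rfl := subset_empty_iff.1 hSE
    refine (eLpNorm_mono_measure _ (Measure.restrict_mono hSF le_rfl)).trans (h3.trans ?_)
    simp
  refine (eLpNorm_mono_measure _ (Measure.restrict_mono hSF le_rfl)).trans (h3.trans ?_)
  have hD : d ≤ setD E F := by
    rw [setD, ← ENNReal.ofReal_le_iff_le_toReal]
    · refine le_iInf₂ fun a ha => le_iInf₂ fun b hb => ?_
      rw [edist_dist]
      exact ENNReal.ofReal_le_ofReal (hd a ha b hb)
    · exact ne_top_of_le_ne_top (edist_ne_top a b)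
        ((iInf₂_le a ha).trans (iInf₂_le b hb))
  have hsq : d ^ 2 ≤ setD E F ^ 2 := pow_le_pow_left₀ hd0 hD 2
  refine mul_le_mul' (ENNReal.ofReal_le_ofReal ?_) le_rfl
  refine mul_le_mul_of_nonneg_left (Real.exp_le_exp.2 ?_) (by positivity)
  exact div_le_div_of_nonneg_right (by nlinarith) ht.le

lemma one_le_Ups {s : ℝ} (hs : 0 < s) : 1 ≤ Ups s := by
  rw [Ups]
  rcases le_total 1 s with h | h
  · exact le_max_of_le_left h
  · exact le_max_of_le_right ((one_le_inv₀ hs).2 h)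

/-- The powers of the radii and of `t` produced by the volumes and by the full off-diagonal
estimate combine into powers of `2^j` and of `Υ`. -/
lemma scale_bound {A B t r ρE ρF : ℝ} {j : ℕ} (hA : 0 ≤ A) (hB : 0 ≤ B) (hAB : B ≤ A)
    (ht : 0 < t) (hr : 0 < r) (hE : 0 < ρE) (hEj : ρE ≤ 2 * (2 ^ j * r))
    (hFr : r ≤ ρF) :
    ρE ^ A * ρF ^ (-B) * t ^ (-((A - B) / 2)) ≤
      2 ^ A * (2 : ℝ) ^ ((j : ℝ) * (B + 1)) *
        Ups ((2 : ℝ) ^ j * r / Real.sqrt t) ^ (A - B + 1) := by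
  set L : ℝ := (2 : ℝ) ^ j * r with hL
  have hL0 : 0 < L := by positivity
  have hs : 0 < Real.sqrt t := Real.sqrt_pos.2 ht
  have hU1 : 1 ≤ Ups (L / Real.sqrt t) := one_le_Ups (by positivity)
  have hF0 : 0 < ρF := hr.trans_le hFr
  have h1 : ρE ^ A ≤ 2 ^ A * L ^ A := by
    rw [← Real.mul_rpow (by norm_num) hL0.le]
    exact Real.rpow_le_rpow hE.le hEj hA
  have h2 : ρF ^ (-B) ≤ (2 : ℝ) ^ ((j : ℝ) * (B + 1)) * L ^ (-B) := by
    calc ρF ^ (-B) ≤ r ^ (-B) := Real.rpow_le_rpow_of_nonpos hr hFr (by linarith)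
      _ = (2 : ℝ) ^ ((j : ℝ) * B) * L ^ (-B) := by
          rw [hL, Real.mul_rpow (by positivity) hr.le, ← mul_assoc, ← Real.rpow_natCast,
            ← Real.rpow_mul (by norm_num), ← Real.rpow_add (by norm_num)]
          simp
      _ ≤ _ := by
          gcongr
          · norm_num
          · linarith
  have h3 : t ^ (-((A - B) / 2)) = Real.sqrt t ^ (-(A - B)) := by
    rw [Real.sqrt_eq_rpow, ← Real.rpow_mul ht.le]
    congr 1; ring
  have h4 : L ^ A * L ^ (-B) * Real.sqrt t ^ (-(A - B)) = (L / Real.sqrt t) ^ (A - B) := by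
    rw [Real.div_rpow hL0.le hs.le, ← Real.rpow_add hL0, Real.rpow_neg hs.le, div_eq_mul_inv]
    rfl
  calc _ ≤ (2 ^ A * L ^ A) * ((2 : ℝ) ^ ((j : ℝ) * (B + 1)) * L ^ (-B)) *
        Real.sqrt t ^ (-(A - B)) := by rw [h3]; gcongr
    _ = 2 ^ A * (2 : ℝ) ^ ((j : ℝ) * (B + 1)) * (L / Real.sqrt t) ^ (A - B) := by
        rw [← h4]; ring
    _ ≤ 2 ^ A * (2 : ℝ) ^ ((j : ℝ) * (B + 1)) * Ups (L / Real.sqrt t) ^ (A - B + 1) := by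
        gcongr ?_ * ?_
        calc (L / Real.sqrt t) ^ (A - B) ≤ Ups (L / Real.sqrt t) ^ (A - B) :=
              Real.rpow_le_rpow (by positivity) (le_max_left _ _) (by linarith)
          _ ≤ _ := Real.rpow_le_rpow_of_exponent_le hU1 (by linarith)

/-- The volume of a ball raised to a power, as the image of a real number. -/
lemma vol_rpow {n : ℕ} (x : En n) {ρ : ℝ} (hρ : 0 < ρ) (e : ℝ) :
    volume (ball x ρ) ^ e =
      ENNReal.ofReal ((volume (ball (0 : En n) 1)).toReal ^ e * ρ ^ (n * e)) := by
  have hv : 0 < (volume (ball (0 : En n) 1)).toReal :=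
    ENNReal.toReal_pos (measure_ball_pos volume _ one_pos).ne' measure_ball_lt_top.ne
  rw [vol_ball_eq x hρ, Measure.addHaar_closedBall _ _ hρ.le, finrank_euclideanSpace_fin,
    ← ENNReal.ofReal_toReal (measure_ball_lt_top (μ := volume) (x := (0 : En n)) (r := 1)).ne,
    ← ENNReal.ofReal_mul (by positivity), ENNReal.ofReal_rpow_of_pos (by positivity), mul_comm,
    Real.mul_rpow hv.le (by positivity), Real.rpow_mul hρ.le, Real.rpow_natCast]
  rw [ENNReal.toReal_ofReal hv.le]

/-- Weighted estimates on balls from a single pair of exponents `p₁ < p`, `q < q₁` of unweighted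
estimates for which the weight has the sharp Muckenhoupt and reverse Hölder conditions. -/
lemma offBalls_of_pair {n : ℕ} {T : ℝ → (En n → ℝ) → (En n → ℝ)} {u : En n → ℝ≥0∞} {κ σ : ℝ}
    {C R : ℝ≥0} (h : Muck u κ C) {p q p₁ q₁ : ℝ} (hp₁ : 0 < p₁) (hp : p = p₁ * (1 + 1 / κ))
    (hσ : 1 < σ) (hq : 0 < q) (hq₁ : q₁ = q * (σ / (σ - 1))) (hpq : p₁ ≤ q₁)
    (hR : ∀ (x : En n) (ρ : ℝ), 0 < ρ →
      lavg (closedBall x ρ) (fun y => u y ^ σ) ^ (1 / σ) ≤ R * lavg (closedBall x ρ) u)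
    (hT : FullOff (ENNReal.ofReal p₁) (ENNReal.ofReal q₁) T) :
    OffBalls (volume.withDensity u) (ENNReal.ofReal p) (ENNReal.ofReal q) T := by
  obtain ⟨c, K, hc, hK, hT⟩ := hT
  have hσ1 : 0 < σ - 1 := by linarith
  have hq₁0 : 0 < q₁ := by rw [hq₁]; positivity
  have hk := h.pos
  have hp0 : 0 < p := by rw [hp]; positivity
  set A : ℝ := n / p₁ with hA
  set B : ℝ := n / q₁ with hB
  have hA0 : 0 ≤ A := by positivity
  have hB0 : 0 ≤ B := by positivity
  have hBA : B ≤ A := by rw [hA, hB]; gcongr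
  set v : ℝ := (volume (ball (0 : En n) 1)).toReal with hv
  have hv0 : 0 < v :=
    ENNReal.toReal_pos (measure_ball_pos volume _ one_pos).ne' measure_ball_lt_top.ne
  -- one estimate that contains all three: `f` is cut to `S ⊆ E`, the average is taken over `S' ⊆ F`
  have main : ∀ t : ℝ, 0 < t → ∀ (x : En n) (r : ℝ), 0 < r → ∀ (f : En n → ℝ) (j : ℕ)
      (ρE ρF d : ℝ) (S E S' F : Set (En n)), 0 < ρE → ρE ≤ 2 * (2 ^ j * r) → r ≤ ρF →
      IsClosed E → IsClosed F → MeasurableSet S → MeasurableSet S' →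
      S ⊆ E → S' ⊆ F → S ⊆ ball x ρE → S' ⊆ ball x ρF → 0 ≤ d →
      (∀ a ∈ E, ∀ b ∈ F, d ≤ dist a b) →
      setAvg (volume.withDensity u) S' (ball x ρF) (ENNReal.ofReal q) (T t (S.indicator f)) ≤
        ENNReal.ofReal (((R : ℝ) ^ (1 / q) * (C : ℝ) ^ (1 / p) * K * v ^ (-(1 / q₁)) * v ^ (1 / p₁)
          * 2 ^ A + 1) * (2 : ℝ) ^ ((j : ℝ) * (B + 1)) *
          Ups ((2 : ℝ) ^ j * r / Real.sqrt t) ^ (A - B + 1) * Real.exp (-c * d ^ 2 / t)) *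
        setAvg (volume.withDensity u) S (ball x ρE) (ENNReal.ofReal p) f := by
    intro t ht x r hr f j ρE ρF d S E S' F hρE hρEj hρF hE hF hS hS' hSE hSF hSb hSb' hd0 hd
    have hρF0 : 0 < ρF := hr.trans_le hρF
    have e1 := upper h hσ hq hq₁ hR x hρF0 hS' hSb' (T t (S.indicator f))
    have e2 := off_diag hc hK hp₁ hq₁0 (rfl : A - B = n / p₁ - n / q₁) hT ht hE hF hS hSE hSF
      hd0 hd f
    have e3 := lower h hp₁ hp x hρE hS hSb f
    refine e1.trans ?_
    refine (mul_le_mul' le_rfl (e2.trans (mul_le_mul' le_rfl e3))).trans ?_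
    rw [vol_rpow x hρF0, vol_rpow x hρE, ← hv,
      show (R : ℝ≥0∞) ^ (1 / q) = ENNReal.ofReal ((R : ℝ) ^ (1 / q)) by
        rw [← ENNReal.ofReal_rpow_of_nonneg R.coe_nonneg (by positivity), ENNReal.ofReal_coe_nnreal],
      show (C : ℝ≥0∞) ^ (1 / p) = ENNReal.ofReal ((C : ℝ) ^ (1 / p)) by
        rw [← ENNReal.ofReal_rpow_of_nonneg C.coe_nonneg (by positivity), ENNReal.ofReal_coe_nnreal]]
    simp only [← mul_assoc]
    have hR0 : (0 : ℝ) ≤ R := R.2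
    have hC0 : (0 : ℝ) ≤ C := C.2
    rw [← ENNReal.ofReal_mul (by positivity), ← ENNReal.ofReal_mul (by positivity),
      ← ENNReal.ofReal_mul (by positivity), ← ENNReal.ofReal_mul (by positivity)]
    refine mul_le_mul' (ENNReal.ofReal_le_ofReal ?_) le_rfl
    have hsc := scale_bound (j := j) (ρF := ρF) hA0 hB0 hBA ht hr hρE hρEj hρF
    set Z : ℝ := (2 : ℝ) ^ ((j : ℝ) * (B + 1)) *
      Ups ((2 : ℝ) ^ j * r / Real.sqrt t) ^ (A - B + 1) with hZ
    have hU : 0 ≤ Ups ((2 : ℝ) ^ j * r / Real.sqrt t) :=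
      zero_le_one.trans (one_le_Ups (by positivity))
    have hZ0 : 0 ≤ Z := by positivity
    set D : ℝ := (R : ℝ) ^ (1 / q) * (C : ℝ) ^ (1 / p) * K * v ^ (-(1 / q₁)) * v ^ (1 / p₁) with hD
    have hD0 : 0 ≤ D := by positivity
    have e4 : (n : ℝ) * (-(1 / q₁)) = -B := by rw [hB]; ring
    have e5 : (n : ℝ) * (1 / p₁) = A := by rw [hA]; ring
    rw [e4, e5]
    calc _ = D * (ρE ^ A * ρF ^ (-B) * t ^ (-((A - B) / 2))) * Real.exp (-c * d ^ 2 / t) := by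
          rw [hD]; ring
      _ ≤ D * (2 ^ A * (2 : ℝ) ^ ((j : ℝ) * (B + 1)) *
            Ups ((2 : ℝ) ^ j * r / Real.sqrt t) ^ (A - B + 1)) * Real.exp (-c * d ^ 2 / t) := by
          gcongr
      _ = D * 2 ^ A * Z * Real.exp (-c * d ^ 2 / t) := by rw [hZ]; ring
      _ ≤ (D * 2 ^ A + 1) * Z * Real.exp (-c * d ^ 2 / t) := by gcongr; linarith
      _ = _ := by rw [hZ]; ring
  refine ⟨B + 1, A - B + 1, c / 4,
    (R : ℝ) ^ (1 / q) * (C : ℝ) ^ (1 / p) * K * v ^ (-(1 / q₁)) * v ^ (1 / p₁) * 2 ^ A + 1,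
    by positivity, by linarith, by positivity, ?_,
    fun t ht x r hr f => ⟨?_, fun j hj => ?_, fun j hj => ?_⟩⟩
  · have hR0 : (0 : ℝ) ≤ R := R.2
    have hC0 : (0 : ℝ) ≤ C := C.2
    positivity
  · have := main t ht x r hr f 0 r r 0 (ball x r) (closedBall x r) (ball x r) (closedBall x r) hr
      (by simp; linarith) le_rfl isClosed_closedBall isClosed_closedBall measurableSet_ball
      measurableSet_ball ball_subset_closedBall ball_subset_closedBall le_rfl le_rfl le_rfl
      (fun _ _ _ _ => dist_nonneg)
    simpa using this
  -- the annulus lies in the closed set `|y - x| ≥ 2^j r`, at distance at least `2^j r / 2` from `B`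
  all_goals
    have hj1 : j ≠ 1 := by omega
    have hann : ann x r j = ball x (2 ^ (j + 1) * r) \ ball x (2 ^ j * r) := if_neg hj1
    have h2j : (1 : ℝ) < 2 ^ j := one_lt_pow₀ (by norm_num) (by omega)
    have h4j : (2 : ℝ) ≤ 2 ^ j := by
      calc (2 : ℝ) = 2 ^ 1 := by norm_num
        _ ≤ 2 ^ j := pow_le_pow_right₀ (by norm_num) (by omega)
    have hmeas : MeasurableSet (ann x r j) := by
      rw [hann]; exact measurableSet_ball.diff measurableSet_ball
    set Fc : Set (En n) := {y | 2 ^ j * r ≤ dist y x} with hFc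
    have hFcl : IsClosed Fc := isClosed_le continuous_const (continuous_id.dist continuous_const)
    have hsub : ann x r j ⊆ Fc := by
      rw [hann]
      intro y hy
      have := hy.2
      rw [mem_ball, not_lt] at this
      exact this
    have hsub2 : ann x r j ⊆ ball x (2 ^ (j + 1) * r) := by rw [hann]; exact sdiff_subset
    have hd : ∀ a ∈ Fc, ∀ b ∈ closedBall x r, 2 ^ j * r / 2 ≤ dist a b := by
      intro a ha b hb
      have h1 : 2 ^ j * r ≤ dist a x := ha
      have h2 : dist b x ≤ r := hb
      have h3 := dist_triangle a b x
      nlinarith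
    have hexp : -c * (2 ^ j * r / 2) ^ 2 / t = -(c / 4) * 4 ^ j * r ^ 2 / t := by
      rw [show (4 : ℝ) = 2 ^ 2 by norm_num, ← pow_mul, mul_comm 2 j, pow_mul]
      ring
    have hrad : (2 : ℝ) ^ (j + 1) * r = 2 * (2 ^ j * r) := by ring
    have hrad2 : r ≤ 2 ^ (j + 1) * r := by rw [hrad]; nlinarith
  · have := main t ht x r hr f j (2 ^ (j + 1) * r) r (2 ^ j * r / 2) (ann x r j) Fc (ball x r)
      (closedBall x r) (by positivity) hrad.le le_rfl hFcl isClosed_closedBall hmeas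
      measurableSet_ball hsub ball_subset_closedBall hsub2 le_rfl (by positivity) hd
    rwa [hexp] at this
  · have := main t ht x r hr f j r (2 ^ (j + 1) * r) (2 ^ j * r / 2) (ball x r) (closedBall x r)
      (ann x r j) Fc hr (hrad2.trans hrad.le) hrad2 isClosed_closedBall hFcl
      measurableSet_ball hmeas ball_subset_closedBall hsub le_rfl hsub2 (by positivity)
      (fun a ha b hb => by rw [dist_comm]; exact hd b hb a ha)
    rwa [hexp] at this

/-! ### Null weights -/

/-- A weight with the Muckenhoupt bound vanishes almost everywhere or almost nowhere: if it vanishes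
on a subset of positive measure of a ball, the dual average over this ball is infinite, so the
average itself must be `0`. -/
lemma ae_zero_or_ae_pos {n : ℕ} {w : En n → ℝ≥0∞} (hw : AEMeasurable w volume) {κ : ℝ}
    (hκ : 0 < κ) {C : ℝ≥0} (hC : ∀ (x : En n) (ρ : ℝ), 0 < ρ →
      lavg (ball x ρ) w * lavg (ball x ρ) (fun y => w y ^ (-κ)) ^ (1 / κ) ≤ C) :
    (∀ᵐ x ∂(volume : Measure (En n)), w x = 0) ∨ (∀ᵐ x ∂(volume : Measure (En n)), w x ≠ 0) := by
  have key : ∀ k : ℕ, (∀ᵐ x ∂volume.restrict (ball (0 : En n) k), w x = 0) ∨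
      (∀ᵐ x ∂volume.restrict (ball (0 : En n) k), w x ≠ 0) := by
    intro k
    rcases Nat.eq_zero_or_pos k with rfl | hk
    · left; simp
    have hk' : (0 : ℝ) < k := by exact_mod_cast hk
    by_contra hcon
    rw [not_or] at hcon
    have hv : volume (ball (0 : En n) (k : ℝ)) ≠ ∞ := measure_ball_lt_top.ne
    have h1 : lavg (ball (0 : En n) k) w ≠ 0 := by
      intro h
      rw [lavg, ENNReal.div_eq_zero_iff, or_iff_left hv, lintegral_eq_zero_iff' hw.restrict] at h
      exact hcon.1 h
    have h2 : lavg (ball (0 : En n) k) (fun y => w y ^ (-κ)) = ∞ := by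
      by_contra h
      have h3 : ∫⁻ y in ball (0 : En n) k, w y ^ (-κ) ≠ ∞ := by
        intro h3
        rw [lavg, h3, ENNReal.top_div_of_ne_top hv] at h
        exact h rfl
      refine hcon.2 ?_
      filter_upwards [ae_lt_top' (hw.restrict.pow_const _) h3] with y hy h0
      rw [h0, ENNReal.zero_rpow_of_neg (by linarith)] at hy
      exact lt_irrefl _ hy
    have h3 := hC 0 k hk'
    rw [h2, ENNReal.top_rpow_of_pos (by positivity), ENNReal.mul_top h1] at h3
    exact absurd h3 (by simp)
  have cover : ∀ P : En n → Prop,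
      (∀ k : ℕ, ∃ m ≥ k, ∀ᵐ x ∂volume.restrict (ball (0 : En n) m), P x) →
      ∀ᵐ x ∂(volume : Measure (En n)), P x := by
    intro P hP
    rw [← Measure.restrict_univ (μ := (volume : Measure (En n))), ← iUnion_ball_nat (0 : En n),
      ae_restrict_iUnion_iff]
    intro k
    obtain ⟨m, hm, h⟩ := hP k
    exact ae_restrict_of_ae_restrict_of_subset (ball_subset_ball (by exact_mod_cast hm)) h
  by_cases hf : ∀ k : ℕ, ∃ m ≥ k, ∀ᵐ x ∂volume.restrict (ball (0 : En n) m), w x = 0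
  · exact Or.inl (cover _ hf)
  · right
    obtain ⟨k, hk⟩ := not_forall.1 hf
    refine cover _ fun l => ⟨max k l, le_max_right _ _, (key _).resolve_left ?_⟩
    exact fun h => hk ⟨_, le_max_left _ _, h⟩

lemma lavg_congr {n : ℕ} {f g : En n → ℝ≥0∞} (h : f =ᵐ[volume] g) (S : Set (En n)) :
    lavg S f = lavg S g := by
  rw [lavg, lavg, lintegral_congr_ae (ae_restrict_of_ae h)]

lemma offBalls_zero {n : ℕ} (p q : ℝ≥0∞) (T : ℝ → (En n → ℝ) → (En n → ℝ)) :
    OffBalls (0 : Measure (En n)) p q T := by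
  refine ⟨1, 1, 1, 1, one_pos, one_pos, one_pos, one_pos, fun t _ x r _ f => ?_⟩
  simp [setAvg]

/-! ### The weighted estimates -/

/-- full unweighted off-diagonal estimates in the range `(p₀,q₀)` imply weighted
off-diagonal estimates on balls for `w ∈ A_{p/p₀} ∩ RH_{(q₀/q)'}`. -/
theorem statement16
    (n : ℕ) (p₀ : ℝ) (q₀ : ℝ≥0∞) (hp₀ : 1 ≤ p₀) (hp₀q₀ : ENNReal.ofReal p₀ < q₀)
    (T : ℝ → (En n → ℝ) → (En n → ℝ))
    (hTsub : ∀ t : ℝ, 0 < t → Sublin volume (T t))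
    (hfull : ∀ p q : ℝ, p₀ < p → p ≤ q → ENNReal.ofReal q < q₀ →
      FullOff (ENNReal.ofReal p) (ENNReal.ofReal q) T) :
    ∀ p q : ℝ, p₀ < p → p ≤ q → ENNReal.ofReal q < q₀ →
      ∀ w : En n → ℝ, (∀ x, 0 ≤ w x) → LocallyIntegrable w volume →
        MemA w (p / p₀) →
        (q₀ ≠ ∞ → MemRH w ((q₀.toReal / q) / (q₀.toReal / q - 1))) →
        OffBalls (volume.withDensity (fun x => ENNReal.ofReal (w x)))
          (ENNReal.ofReal p) (ENNReal.ofReal q) T := by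
  intro p q hp hpq hq w _ hwi hA hRH
  have hp₀0 : 0 < p₀ := by linarith
  have hp0 : 0 < p := by linarith
  have hq0 : 0 < q := by linarith
  have hs : 1 < p / p₀ := (one_lt_div hp₀0).2 hp
  rcases hA with ⟨hs1, -⟩ | ⟨-, C, hC⟩
  · exact absurd hs1 hs.ne'
  -- the dual exponent of `A_{p/p₀}`
  obtain ⟨κ, hκ⟩ : ∃ κ, κ = 1 / (p / p₀ - 1) := ⟨_, rfl⟩
  have hs' : 0 < p / p₀ - 1 := by linarith
  have hκ0 : 0 < κ := by rw [hκ]; positivity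
  have hκ1 : 1 - p / p₀ / (p / p₀ - 1) = -κ := by
    rw [hκ]
    generalize p / p₀ = s at hs'
    field_simp
    ring
  have hκ2 : p / p₀ - 1 = 1 / κ := by rw [hκ, one_div_one_div]
  rw [hκ1, hκ2] at hC
  have hwm : AEMeasurable w volume := hwi.aestronglyMeasurable.aemeasurable
  rcases ae_zero_or_ae_pos hwm.ennreal_ofReal hκ0 hC with h0 | h0
  · rw [withDensity_congr_ae (g := 0) h0, withDensity_zero]
    exact offBalls_zero _ _ _
  -- a representative of `w` that is measurable and positive everywhere
  obtain ⟨u, hu⟩ : ∃ u : En n → ℝ≥0∞, u = fun x =>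
    if 0 < hwm.mk w x then ENNReal.ofReal (hwm.mk w x) else 1 := ⟨_, rfl⟩
  have hwu : (fun x => ENNReal.ofReal (w x)) =ᵐ[volume] u := by
    filter_upwards [h0, hwm.ae_eq_mk] with x hx hx'
    have h1 : 0 < w x := by simpa using hx
    rw [hx'] at h1
    simp [hu, h1, hx']
  have hpow : ∀ e : ℝ, (fun x => ENNReal.ofReal (w x) ^ e) =ᵐ[volume] fun x => u x ^ e :=
    fun e => hwu.mono fun x hx => by simp only [hx]
  rw [withDensity_congr_ae hwu]
  have hM : Muck u κ C := by
    refine ⟨?_, fun x => ?_, fun x => ?_, hκ0, fun x ρ hρ => ?_⟩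
    · rw [hu]
      exact Measurable.ite (measurableSet_lt measurable_const hwm.measurable_mk)
        hwm.measurable_mk.ennreal_ofReal measurable_const
    · simp only [hu]; split_ifs with h <;> simp [h]
    · simp only [hu]; split_ifs with h <;> simp
    · rw [← lavg_ball_eq x hρ, ← lavg_ball_eq x hρ, ← lavg_congr hwu, ← lavg_congr (hpow _)]
      exact hC x ρ hρ
  -- the two self-improvements provide room to lower `p` and to raise `q`
  obtain ⟨κ₁, hκ₁, C₁, hM₁⟩ := hM.open_dual
  have hκ₁0 : 0 < κ₁ := hM₁.pos
  obtain ⟨p₁, hp₁⟩ : ∃ p₁, p₁ = p / (1 + 1 / κ₁) := ⟨_, rfl⟩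
  have hpp₁ : p = p₁ * (1 + 1 / κ₁) := by rw [hp₁]; field_simp
  have hp₁p : p₁ ≤ p := by
    have : 0 < 1 / κ₁ := by positivity
    rw [hp₁]
    exact div_le_self hp0.le (by linarith)
  have hp₁0 : p₀ < p₁ := by
    have h1 : 1 / κ₁ < 1 / κ := one_div_lt_one_div_of_lt hκ0 hκ₁
    rw [hp₁, lt_div_iff₀ (by positivity)]
    calc p₀ * (1 + 1 / κ₁) < p₀ * (1 + 1 / κ) := by gcongr
      _ = p := by rw [← hκ2]; field_simp; ring
  -- the reverse Hölder exponent `(q₀/q)'` and its slight increase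
  obtain ⟨σ, hσ, R, hR, hσq⟩ : ∃ σ : ℝ, 1 ≤ σ ∧ ∃ R : ℝ≥0,
      (∀ (x : En n) (ρ : ℝ), 0 < ρ → lavg (closedBall x ρ) (fun y => u y ^ σ) ^ (1 / σ) ≤
        R * lavg (closedBall x ρ) u) ∧
      ∀ σ₁ > σ, ENNReal.ofReal (q * (σ₁ / (σ₁ - 1))) < q₀ := by
    by_cases hq₀ : q₀ = ∞
    · refine ⟨1, le_rfl, 1, fun x ρ _ => by simp, fun σ₁ _ => ?_⟩
      rw [hq₀]; exact ENNReal.ofReal_lt_top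
    · have hQ : q < q₀.toReal := (ENNReal.ofReal_lt_iff_lt_toReal hq0.le hq₀).1 hq
      have ha : 1 < q₀.toReal / q := (one_lt_div hq0).2 hQ
      obtain ⟨a, ha'⟩ : ∃ a, a = q₀.toReal / q := ⟨_, rfl⟩
      rw [← ha'] at ha
      have ha1 : 0 < a - 1 := by linarith
      have hqa : q₀.toReal = q * a := by rw [ha']; field_simp
      obtain ⟨R, hR⟩ := hRH hq₀
      rw [← ha'] at hR
      have hσ1 : 1 < a / (a - 1) := (one_lt_div ha1).2 (by linarith)
      refine ⟨a / (a - 1), hσ1.le, R, fun x ρ hρ => ?_, fun σ₁ hσ₁ => ?_⟩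
      · rw [← lavg_ball_eq x hρ, ← lavg_ball_eq x hρ, ← lavg_congr hwu, ← lavg_congr (hpow _)]
        exact hR x ρ hρ
      · have h1 : 0 < σ₁ - 1 := by linarith
        have h2 : 0 < σ₁ := by linarith
        rw [ENNReal.ofReal_lt_iff_lt_toReal (by positivity) hq₀, hqa]
        refine mul_lt_mul_of_pos_left ?_ hq0
        rw [gt_iff_lt, div_lt_iff₀ ha1] at hσ₁
        rw [div_lt_iff₀ h1]
        linarith
  obtain ⟨σ₁, hσ₁, R₁, hR₁⟩ := hM.open_RH hσ hR
  have hσ₁1 : 1 < σ₁ := by linarith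
  have hqq₁ : q ≤ q * (σ₁ / (σ₁ - 1)) :=
    le_mul_of_one_le_right hq0.le ((one_le_div (by linarith)).2 (by linarith))
  have hpq₁ : p₁ ≤ q * (σ₁ / (σ₁ - 1)) := by linarith
  exact offBalls_of_pair hM₁ (by linarith) hpp₁ hσ₁1 hq0 rfl hpq₁ hR₁
    (hfull _ _ hp₁0 hpq₁ (hσq σ₁ hσ₁))

end
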